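/- For all j₁, j₂ ∈ {0,1} there are isomorphisms of left u-modules: (1) S_{n²,j₁}⊗S_{n²−2,j₂} ≅ S_{n²−2, \overline{j₁+j₂}}; (2) S_{2,j₁}⊗S_{n²−2,j₂} ≅ S_{4, \overline{j₁+j₂}} ⊕ P_{2, \overline{j₁+j₂+1}}. -/

import Mathlib

noncomputable section

open scoped TensorProduct

namespace QFL

/-- The defining relations of the quasi-Frobenius-Lusztig kernel `ũ_q(sl₂)`,
on the free algebra on four generators `K = ι 0`, `K̂ = ι 1`, `E = ι 2`, `F = ι 3`. -/
inductive Rel (k : Type) [Field k] (n : ℕ) (q : k) :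
    FreeAlgebra k (Fin 4) → FreeAlgebra k (Fin 4) → Prop
  | Kord : Rel k n q (FreeAlgebra.ι k (0 : Fin 4) ^ n) 1
  | Khord : Rel k n q (FreeAlgebra.ι k (1 : Fin 4) ^ n)
      ((FreeAlgebra.ι k (0 : Fin 4) ^ (n - 1)) ^ 2)
  | KKh : Rel k n q (FreeAlgebra.ι k (0 : Fin 4) * FreeAlgebra.ι k (1 : Fin 4))
      (FreeAlgebra.ι k (1 : Fin 4) * FreeAlgebra.ι k (0 : Fin 4))
  | KE : Rel k n q
      (FreeAlgebra.ι k (0 : Fin 4) * FreeAlgebra.ι k (2 : Fin 4) *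
        FreeAlgebra.ι k (0 : Fin 4) ^ (n - 1))
      (q ^ n • FreeAlgebra.ι k (2 : Fin 4))
  | KF : Rel k n q
      (FreeAlgebra.ι k (0 : Fin 4) * FreeAlgebra.ι k (3 : Fin 4) *
        FreeAlgebra.ι k (0 : Fin 4) ^ (n - 1))
      ((q ^ n)⁻¹ • FreeAlgebra.ι k (3 : Fin 4))
  | KhE : Rel k n q
      (FreeAlgebra.ι k (1 : Fin 4) * FreeAlgebra.ι k (2 : Fin 4) *
        FreeAlgebra.ι k (1 : Fin 4) ^ (n ^ 2 - 1))
      ((q ^ n * (q ^ 2)⁻¹) • FreeAlgebra.ι k (2 : Fin 4))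
  | KhF : Rel k n q
      (FreeAlgebra.ι k (1 : Fin 4) * FreeAlgebra.ι k (3 : Fin 4) *
        FreeAlgebra.ι k (1 : Fin 4) ^ (n ^ 2 - 1))
      (((q ^ n)⁻¹ * q ^ 2) • FreeAlgebra.ι k (3 : Fin 4))
  | Enil : Rel k n q (FreeAlgebra.ι k (2 : Fin 4) ^ n ^ 2) 0
  | Fnil : Rel k n q (FreeAlgebra.ι k (3 : Fin 4) ^ n ^ 2) 0
  | EF : Rel k n q
      (FreeAlgebra.ι k (3 : Fin 4) * FreeAlgebra.ι k (2 : Fin 4) -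
        q⁻¹ • (FreeAlgebra.ι k (2 : Fin 4) * FreeAlgebra.ι k (3 : Fin 4)))
      (1 - FreeAlgebra.ι k (0 : Fin 4) ^ (n - 1) * FreeAlgebra.ι k (1 : Fin 4))

/-- The algebra `ũ_q(sl₂)` as the quotient of the free algebra by the defining relations. -/
abbrev U (k : Type) [Field k] (n : ℕ) (q : k) := RingQuot (Rel k n q)

variable (k : Type) [Field k] (n : ℕ) (q : k)

def K : U k n q := RingQuot.mkAlgHom k (Rel k n q) (FreeAlgebra.ι k (0 : Fin 4))
def Kh : U k n q := RingQuot.mkAlgHom k (Rel k n q) (FreeAlgebra.ι k (1 : Fin 4))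
def E : U k n q := RingQuot.mkAlgHom k (Rel k n q) (FreeAlgebra.ι k (2 : Fin 4))
def F : U k n q := RingQuot.mkAlgHom k (Rel k n q) (FreeAlgebra.ι k (3 : Fin 4))

/-- `K⁻¹ = K^(n-1)`. -/
def Kinv : U k n q := K k n q ^ (n - 1)
/-- `K̂⁻¹ = K̂^(n²-1)`. -/
def Khinv : U k n q := Kh k n q ^ (n ^ 2 - 1)

/-- `φ_{2i} = (2/n²) Σ_{t<n²/2} q^{-2it} (K⁻¹K̂)^t`. -/
def phi (i : ℕ) : U k n q :=
  ((n ^ 2 : k)⁻¹ * 2) • ∑ t ∈ Finset.range (n ^ 2 / 2),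
    (q⁻¹ ^ (2 * i * t)) • (Kinv k n q * Kh k n q) ^ t

/-- `𝟙₀ = (1/2)(1 + KK̂^(n/2))` and `𝟙₁ = (1/2)(1 - KK̂^(n/2))`. -/
def oneJ (j : ℕ) : U k n q :=
  if j = 0 then (2 : k)⁻¹ • (1 + K k n q * Kh k n q ^ (n / 2))
  else (2 : k)⁻¹ • (1 - K k n q * Kh k n q ^ (n / 2))

/-- The idempotent `e_{2i,j} = φ_{2i} 𝟙_j`. -/
def eIdem (i j : ℕ) : U k n q := phi k n q i * oneJ k n q j

/-- `α_{2i,j} = F^(n²-1) e_{2i,j}`. -/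
def alpha (i j : ℕ) : U k n q := F k n q ^ (n ^ 2 - 1) * eIdem k n q i j

/-- `β_{2i,j} = E^(2i-2) α_{2i,j}`. -/
def beta (i j : ℕ) : U k n q := E k n q ^ (2 * i - 2) * alpha k n q i j

/-- The Gaussian number `s_q = 1 + q + ⋯ + q^(s-1)`. -/
def gauss (x : k) (s : ℕ) : k := ∑ t ∈ Finset.range s, x ^ t

/-- The span of the PBW-type monomials `F^a K^c K̂^d E^b` with `a ≤ n²-2`, `b ≤ n²-1`,
`c ≤ n-1`, `d ≤ n²-1`. -/
def pbw : Submodule k (U k n q) :=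
  Submodule.span k {x | ∃ a b c d : ℕ, a ≤ n ^ 2 - 2 ∧ b ≤ n ^ 2 - 1 ∧ c ≤ n - 1 ∧
    d ≤ n ^ 2 - 1 ∧ x = F k n q ^ a * K k n q ^ c * Kh k n q ^ d * E k n q ^ b}

/-- `γ_{2i,j}`: the unique element of the PBW span with `F·γ = β_{2i,j}`. -/
def gam (i j : ℕ) : U k n q :=
  @dite _ (∃! x, x ∈ pbw k n q ∧ F k n q * x = beta k n q i j)
    (Classical.propDecidable _) (fun h => h.choose) (fun _ => 0)

/-- The left ideal `P_{2i,j} = u·γ_{2i,j}`. -/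
def P (i j : ℕ) : Submodule (U k n q) (U k n q) :=
  Submodule.span (U k n q) {gam k n q i j}

/-- `S_{2i,j} = Soc(P_{2i,j})`, the sum of all simple submodules of `P_{2i,j}`. -/
def S (i j : ℕ) : Submodule (U k n q) (U k n q) :=
  sSup {N : Submodule (U k n q) (U k n q) | N ≤ P k n q i j ∧ IsSimpleModule (U k n q) N}

end QFL

namespace QFL

variable (k : Type) [Field k] (n : ℕ) (q : k)

/-- `1_r = (1/n) Σ_{t<n} q̄^{(n-r)t} K^t`. -/
def oneIdem (r : ℕ) : U k n q :=
  (n : k)⁻¹ • ∑ t ∈ Finset.range n, ((q ^ n) ^ ((n - r) * t)) • K k n q ^ t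

/-- `♭ = Σ_{r<n} q^{-r} 1_r` (an invertible element of `u`). -/
def flat : U k n q := ∑ r ∈ Finset.range n, (q⁻¹ ^ r) • oneIdem k n q r

/-- The property that `Δ` is the comultiplication of `ũ_q(sl₂)` (which exists and is the
unique algebra map with these values on the generators). -/
def IsComul (Δ : U k n q →ₐ[k] (U k n q ⊗[k] U k n q)) : Prop :=
  Δ (K k n q) = K k n q ⊗ₜ[k] K k n q ∧
  Δ (Kh k n q) = Kh k n q ⊗ₜ[k] Kh k n q ∧
  Δ (E k n q) = (E k n q ⊗ₜ[k] Ring.inverse (flat k n q)) +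
    (Kinv k n q ⊗ₜ[k] (oneIdem k n q 0 * E k n q)) +
    ((1 : U k n q) ⊗ₜ[k] ((∑ r ∈ Finset.Icc 1 (n - 1), oneIdem k n q r) * E k n q)) ∧
  Δ (F k n q) = (F k n q ⊗ₜ[k] flat k n q) +
    ((Kinv k n q * Kh k n q) ⊗ₜ[k]
      (F k n q * ∑ r ∈ Finset.Icc 1 (n - 1), oneIdem k n q r)) +
    (Kh k n q ⊗ₜ[k] (F k n q * oneIdem k n q 0))

instance (N : Submodule (U k n q) (U k n q)) : SMulCommClass (U k n q) k N := by
  constructor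
  intro a b m
  ext
  show a • b • (m : U k n q) = b • a • (m : U k n q)
  rw [smul_comm]

/-- The `u`-module structure on `M ⊗[k] N` obtained from left `u`-modules `M`, `N` by letting
`u` act through the comultiplication `Δ`. -/
def tensorModule (Δ : U k n q →ₐ[k] (U k n q ⊗[k] U k n q))
    (M N : Type) [AddCommGroup M] [Module k M] [Module (U k n q) M]
    [IsScalarTower k (U k n q) M] [SMulCommClass (U k n q) k M]
    [AddCommGroup N] [Module k N] [Module (U k n q) N]
    [IsScalarTower k (U k n q) N] [SMulCommClass (U k n q) k N] :
    Module (U k n q) (M ⊗[k] N) :=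
  Module.compHom (M ⊗[k] N)
    ((Module.endTensorEndAlgHom (R := k) (S := k) (A := k) (M := M) (N := N)).comp
      ((Algebra.TensorProduct.map (Algebra.lsmul k k M) (Algebra.lsmul k k N)).comp
        Δ)).toRingHom

end QFL

/-!
Replacing highest-weight vectors by weight vectors killed by `F`, the theory runs parallel to that
of `sl₂`. The simple module `S_{2i,j}` has the basis `E ^ m • s`, `m ≤ n² - 2i`, where
`s = E ^ (2i - 1) • α` is killed by `F`; the module `P_{2i,j}` has the basis `E ^ m • γ`,
`E ^ m • α`, `m < n²`, and the kernel of `F` on it is spanned by `α` and `s`. That no further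
collapse occurs is seen on a module with basis `F^a E^b v`, `a, b < n²`, generated by a weight
vector `v`.

On a weight vector each of the idempotents `1₀` and `∑_{r ≥ 1} 1_r` acts as `0` or `1`, so in a
tensor product of simple modules `E` and `F` move `E ^ l • x ⊗ E ^ m • y` to its two neighbours,
with coefficients that vanish only where they must. Only this shape matters. If the first factor is
`S_{n²}` there is a single row, which is the first decomposition. For `S₂ ⊗ S_{n²-2}` the grid is
`(n² - 1) × 3`: the antidiagonal of length three carries a vector killed by `F`, which receives
`S₄`, while the corner `x ⊗ y` and its neighbour `x ⊗ E • y` receive `α` and `γ` of `P₂`. The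
resulting map from `S₄ ⊕ P₂` is injective because it is injective on the kernel of the nilpotent
operator `F`, and the dimensions agree.
-/

namespace QFL

variable {k : Type} [Field k] {n : ℕ} {q : k}

local notation "𝐊" => K k n q
local notation "𝐊h" => Kh k n q
local notation "𝐋" => Kinv k n q * Kh k n q
local notation "𝐄" => E k n q
local notation "𝐅" => F k n q

lemma mul_eq_smul_mul_of_conj {A : Type*} [Ring A] [Algebra k A] {x y z : A} {c : k}
    (h : x * y * z = c • y) (hzx : z * x = 1) : x * y = c • (y * x) := by
  rw [← smul_mul_assoc, ← h, mul_assoc (x * y), hzx, mul_one]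

/-! ### The defining relations -/

lemma K_pow : 𝐊 ^ n = 1 := by
  simpa only [K, map_pow, map_one] using
    RingQuot.mkAlgHom_rel k (Rel.Kord (k := k) (n := n) (q := q))

lemma Kh_pow : 𝐊h ^ n = (𝐊 ^ (n - 1)) ^ 2 := by
  simpa only [K, Kh, map_pow] using RingQuot.mkAlgHom_rel k (Rel.Khord (k := k) (n := n) (q := q))

lemma K_mul_Kh : 𝐊 * 𝐊h = 𝐊h * 𝐊 := by
  simpa only [K, Kh, map_mul] using RingQuot.mkAlgHom_rel k (Rel.KKh (k := k) (n := n) (q := q))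

lemma Kh_pow_sq : 𝐊h ^ n ^ 2 = 1 := by
  rw [sq, pow_mul, Kh_pow, ← pow_mul, ← pow_mul,
    show (n - 1) * (2 * n) = n * ((n - 1) * 2) by ring, pow_mul, K_pow, one_pow]

lemma E_pow_sq : 𝐄 ^ n ^ 2 = 0 := by
  simpa only [E, map_pow, map_zero] using
    RingQuot.mkAlgHom_rel k (Rel.Enil (k := k) (n := n) (q := q))

lemma F_pow_sq : 𝐅 ^ n ^ 2 = 0 := by
  simpa only [F, map_pow, map_zero] using
    RingQuot.mkAlgHom_rel k (Rel.Fnil (k := k) (n := n) (q := q))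

lemma F_mul_E : 𝐅 * 𝐄 = q⁻¹ • (𝐄 * 𝐅) + (1 - 𝐋) := by
  rw [← sub_eq_iff_eq_add']
  simpa only [K, Kh, E, F, Kinv, map_mul, map_pow, map_smul, map_sub, map_one] using
    RingQuot.mkAlgHom_rel k (Rel.EF (k := k) (n := n) (q := q))

section Nonzero

variable [NeZero n]

lemma Kinv_mul_K : Kinv k n q * 𝐊 = 1 := by
  rw [Kinv, ← pow_succ, Nat.sub_add_cancel NeZero.one_le, K_pow]

lemma K_mul_Kinv : 𝐊 * Kinv k n q = 1 := by
  rw [Kinv, ← pow_succ', Nat.sub_add_cancel NeZero.one_le, K_pow]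

lemma Khinv_mul_Kh : Khinv k n q * 𝐊h = 1 := by
  rw [Khinv, ← pow_succ, Nat.sub_add_cancel NeZero.one_le, Kh_pow_sq]

lemma K_mul_L : 𝐊 * (𝐋) = 𝐊h := by
  rw [← mul_assoc, K_mul_Kinv, one_mul]

lemma K_mul_E : 𝐊 * 𝐄 = q ^ n • (𝐄 * 𝐊) :=
  mul_eq_smul_mul_of_conj (by
    simpa only [K, E, Kinv, map_mul, map_pow, map_smul] using
      RingQuot.mkAlgHom_rel k (Rel.KE (k := k) (n := n) (q := q))) Kinv_mul_K

lemma K_mul_F : 𝐊 * 𝐅 = (q ^ n)⁻¹ • (𝐅 * 𝐊) :=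
  mul_eq_smul_mul_of_conj (by
    simpa only [K, F, Kinv, map_mul, map_pow, map_smul] using
      RingQuot.mkAlgHom_rel k (Rel.KF (k := k) (n := n) (q := q))) Kinv_mul_K

lemma Kh_mul_E : 𝐊h * 𝐄 = (q ^ n * (q ^ 2)⁻¹) • (𝐄 * 𝐊h) :=
  mul_eq_smul_mul_of_conj (by
    simpa only [Kh, E, Khinv, map_mul, map_pow, map_smul] using
      RingQuot.mkAlgHom_rel k (Rel.KhE (k := k) (n := n) (q := q))) Khinv_mul_Kh

lemma Kh_mul_F : 𝐊h * 𝐅 = ((q ^ n)⁻¹ * q ^ 2) • (𝐅 * 𝐊h) :=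
  mul_eq_smul_mul_of_conj (by
    simpa only [Kh, F, Khinv, map_mul, map_pow, map_smul] using
      RingQuot.mkAlgHom_rel k (Rel.KhF (k := k) (n := n) (q := q))) Khinv_mul_Kh

end Nonzero

lemma U_induction {p : U k n q → Prop} (algebraMap : ∀ c : k, p (algebraMap k _ c))
    (K : p 𝐊) (Kh : p 𝐊h) (E : p 𝐄) (F : p 𝐅)
    (add : ∀ x y, p x → p y → p (x + y)) (mul : ∀ x y, p x → p y → p (x * y)) (u : U k n q) :
    p u := by
  obtain ⟨a, rfl⟩ := RingQuot.mkAlgHom_surjective k (Rel k n q) u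
  induction a using FreeAlgebra.induction with
  | grade0 r => rw [AlgHom.commutes]; exact algebraMap r
  | grade1 x => fin_cases x <;> assumption
  | mul a b ha hb => rw [map_mul]; exact mul _ _ ha hb
  | add a b ha hb => rw [map_add]; exact add _ _ ha hb

/-! ### Gaussian numbers and the commutation of `F` with powers of `E` -/

lemma gauss_succ (x : k) (m : ℕ) : gauss k x (m + 1) = gauss k x m + x ^ m :=
  Finset.sum_range_succ _ _

lemma gauss_succ' (x : k) (m : ℕ) : gauss k x (m + 1) = 1 + x * gauss k x m := by
  simp only [gauss, Finset.sum_range_succ', Finset.mul_sum, pow_succ', pow_zero, add_comm]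

lemma gauss_ne_zero {x : k} {m : ℕ} (hx : x ^ m ≠ 1) : gauss k x m ≠ 0 := fun h => hx <| by
  have hgeom := mul_geom_sum x m
  rw [← gauss, h, mul_zero] at hgeom
  exact (sub_eq_zero.1 hgeom.symm)

lemma gauss_inv_ne_zero {N m : ℕ} (hq : IsPrimitiveRoot q N) (h0 : 0 < m) (hm : m < N) :
    gauss k q⁻¹ m ≠ 0 :=
  gauss_ne_zero (hq.inv.pow_ne_one_of_pos_of_lt h0.ne' hm)

lemma gauss_inv_eq_zero {N : ℕ} (hN : 1 < N) (hq : IsPrimitiveRoot q N) : gauss k q⁻¹ N = 0 :=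
  hq.inv.geom_sum_eq_zero hN

lemma mul_pow_succ_of_skew_comm {A : Type*} [Ring A] [Algebra k A] {e f l : A} {p : k}
    (hfe : f * e = p • (e * f) + (1 - l)) (hle : l * e = p ^ 2 • (e * l)) (m : ℕ) :
    f * e ^ (m + 1) =
      p ^ (m + 1) • (e ^ (m + 1) * f) + gauss k p (m + 1) • (e ^ m * (1 - p ^ m • l)) := by
  induction m with
  | zero => simp [hfe, gauss]
  | succ m ih =>
    rw [pow_succ e (m + 1), ← mul_assoc, ih, add_mul, smul_mul_assoc, mul_assoc, hfe,
      smul_mul_assoc, mul_assoc, sub_mul, smul_mul_assoc, hle, gauss_succ _ (m + 1)]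
    simp only [add_smul, mul_add, mul_sub, smul_add, smul_sub, mul_one, one_mul, mul_smul_comm,
      smul_smul, pow_succ, mul_assoc]
    have hgauss : p * gauss k p (m + 1) + 1 = gauss k p (m + 1) + p ^ (m + 1) := by
      rw [← gauss_succ, gauss_succ' p (m + 1), add_comm]
    match_scalars
    · ring
    · ring
    · linear_combination (-(p * p ^ m)) * hgauss

/-! ### Weight vectors -/

/-- A (possibly zero) vector of weight `i` and sign `ε`: the powers of `q` are chosen so that `E`
lowers the weight by one, `F` raises it by one, and `K⁻¹K̂` acts by `q ^ (2 * i)`. -/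
structure IsWeightVector {M : Type*} [AddCommGroup M] [Module k M] (n : ℕ) (q : k)
    [Module (U k n q) M] (i : ℤ) (ε : kˣ) (x : M) : Prop where
  K_smul : K k n q • x = (ε * q ^ (-(n * i))) • x
  Kh_smul : Kh k n q • x = (ε * q ^ ((2 - n) * i)) • x

/-- A weight vector (possibly zero) killed by `F`, the analogue of a highest-weight vector. -/
structure IsPrimitiveVector {M : Type*} [AddCommGroup M] [Module k M] (n : ℕ) (q : k)
    [Module (U k n q) M] (i : ℤ) (ε : kˣ) (x : M) : Prop extends IsWeightVector n q i ε x where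
  F_smul : F k n q • x = 0

section Weights

variable {M M' : Type*} [AddCommGroup M] [Module k M] [Module (U k n q) M]
  [AddCommGroup M'] [Module k M'] [Module (U k n q) M']

lemma IsWeightVector.add {i : ℤ} {ε : kˣ} {x y : M} (hx : IsWeightVector n q i ε x)
    (hy : IsWeightVector n q i ε y) : IsWeightVector n q i ε (x + y) :=
  ⟨by rw [smul_add, hx.K_smul, hy.K_smul, smul_add],
    by rw [smul_add, hx.Kh_smul, hy.Kh_smul, smul_add]⟩

variable [IsScalarTower k (U k n q) M]

lemma smul_smul_of_mul_eq {u v : U k n q} {c d : k} {x : M} (huv : u * v = c • (v * u))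
    (hx : u • x = d • x) : u • v • x = (c * d) • v • x := by
  rw [← mul_smul, huv, smul_assoc, mul_smul, hx, smul_algebra_smul_comm, smul_smul]

namespace IsWeightVector

variable {i j : ℤ} {ε : kˣ} {x : M}

lemma smul (hx : IsWeightVector n q i ε x) (c : k) : IsWeightVector n q i ε (c • x) :=
  ⟨by rw [smul_algebra_smul_comm, hx.K_smul, smul_comm],
    by rw [smul_algebra_smul_comm, hx.Kh_smul, smul_comm]⟩

lemma map [IsScalarTower k (U k n q) M'] (hx : IsWeightVector n q i ε x) (f : M →ₗ[U k n q] M') :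
    IsWeightVector n q i ε (f x) :=
  ⟨by rw [← map_smul, hx.K_smul, LinearMap.map_smul_of_tower],
    by rw [← map_smul, hx.Kh_smul, LinearMap.map_smul_of_tower]⟩

lemma of_map [IsScalarTower k (U k n q) M'] {f : M →ₗ[U k n q] M'} (hf : Function.Injective f)
    (hx : IsWeightVector n q i ε (f x)) : IsWeightVector n q i ε x :=
  ⟨hf (by rw [map_smul, hx.K_smul, LinearMap.map_smul_of_tower]),
    hf (by rw [map_smul, hx.Kh_smul, LinearMap.map_smul_of_tower])⟩

section Nonzero

variable [NeZero n] [NeZero q]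

lemma E_smul (hx : IsWeightVector n q i ε x) : IsWeightVector n q (i - 1) ε (𝐄 • x) := by
  have hq : q ≠ 0 := NeZero.ne q
  constructor
  · rw [smul_smul_of_mul_eq K_mul_E hx.K_smul, mul_left_comm, ← zpow_natCast, ← zpow_add₀ hq]
    congr 3
    ring
  · rw [smul_smul_of_mul_eq Kh_mul_E hx.Kh_smul, mul_left_comm, ← zpow_natCast,
      ← zpow_natCast q 2, ← zpow_neg, ← zpow_add₀ hq, ← zpow_add₀ hq]
    congr 3
    push_cast
    ring

lemma F_smul (hx : IsWeightVector n q i ε x) : IsWeightVector n q (i + 1) ε (𝐅 • x) := by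
  have hq : q ≠ 0 := NeZero.ne q
  constructor
  · rw [smul_smul_of_mul_eq K_mul_F hx.K_smul, mul_left_comm, ← zpow_natCast, ← zpow_neg,
      ← zpow_add₀ hq]
    congr 3
    ring
  · rw [smul_smul_of_mul_eq Kh_mul_F hx.Kh_smul, mul_left_comm, ← zpow_natCast,
      ← zpow_natCast q 2, ← zpow_neg, ← zpow_add₀ hq, ← zpow_add₀ hq]
    congr 3
    push_cast
    ring

lemma E_pow_smul (hx : IsWeightVector n q i ε x) (m : ℕ) :
    IsWeightVector n q (i - m) ε (𝐄 ^ m • x) := by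
  induction m with
  | zero => simpa using hx
  | succ m ih =>
    rw [pow_succ', mul_smul, Nat.cast_succ, ← sub_sub]
    exact ih.E_smul

lemma F_pow_smul (hx : IsWeightVector n q i ε x) (m : ℕ) :
    IsWeightVector n q (i + m) ε (𝐅 ^ m • x) := by
  induction m with
  | zero => simpa using hx
  | succ m ih =>
    rw [pow_succ', mul_smul, Nat.cast_succ, ← add_assoc]
    exact ih.F_smul

lemma L_smul (hx : IsWeightVector n q i ε x) : (𝐋) • x = q ^ (2 * i) • x := by
  have hq : q ≠ 0 := NeZero.ne q
  have hKinv : Kinv k n q • x = (ε * q ^ (-(n * i) : ℤ))⁻¹ • x := by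
    rw [eq_inv_smul_iff₀ (mul_ne_zero ε.ne_zero (zpow_ne_zero _ hq)), ← smul_algebra_smul_comm,
      ← hx.K_smul, ← mul_smul, Kinv_mul_K, one_smul]
  rw [mul_smul, hx.Kh_smul, smul_algebra_smul_comm, hKinv, smul_smul, mul_inv,
    mul_mul_mul_comm, mul_inv_cancel₀ ε.ne_zero, one_mul, ← zpow_neg, ← zpow_add₀ hq]
  congr 2
  ring

end Nonzero

lemma of_modEq [NeZero q] (hn : Even n) (hq : q ^ n ^ 2 = 1) (hx : IsWeightVector n q i ε x)
    (hij : 2 * i ≡ 2 * j [ZMOD n ^ 2]) : IsWeightVector n q j ε x := by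
  obtain ⟨p, rfl⟩ := hn
  obtain ⟨z, hz⟩ := hij.dvd
  have hper (a t : ℤ) : q ^ (a + ((p + p : ℕ) : ℤ) ^ 2 * t) = q ^ a := by
    rw [zpow_add₀ (NeZero.ne q), zpow_mul, ← Nat.cast_pow, zpow_natCast, hq, one_zpow, mul_one]
  constructor
  · rw [hx.K_smul, ← hper _ (-p * z)]
    congr 3
    push_cast at hz ⊢
    linear_combination (p : ℤ) * hz
  · rw [hx.Kh_smul, ← hper _ ((1 - p) * z)]
    congr 3
    push_cast at hz ⊢
    linear_combination ((p : ℤ) - 1) * hz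

end IsWeightVector

lemma L_mul_E [NeZero n] : (𝐋) * 𝐄 = q⁻¹ ^ 2 • (𝐄 * (𝐋)) := by
  refine (isUnit_iff_exists.2 ⟨_, K_mul_Kinv, Kinv_mul_K⟩).mul_left_cancel ?_
  rw [mul_smul_comm, ← mul_assoc, ← mul_assoc 𝐊 𝐄, K_mul_L, K_mul_E, Kh_mul_E, smul_mul_assoc,
    mul_assoc 𝐄, K_mul_L, smul_smul, inv_pow, mul_comm]

/-- The scalar by which `F` takes `E ^ m • x` to `E ^ (m - 1) • x`, for a primitive vector `x` of
weight `i`. -/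
def loweringCoeff (q : k) (i : ℤ) (m : ℕ) : k := gauss k q⁻¹ m * (1 - q ^ (2 * i - m + 1))

lemma loweringCoeff_zero (i : ℤ) : loweringCoeff q i 0 = 0 := by simp [loweringCoeff, gauss]

lemma loweringCoeff_eq_zero_of_eq {N : ℕ} (hN : 1 < N) (hq : IsPrimitiveRoot q N) (i : ℤ) :
    loweringCoeff q i N = 0 := by
  rw [loweringCoeff, gauss_inv_eq_zero hN hq, zero_mul]

lemma loweringCoeff_eq_zero_iff {N : ℕ} (hq : IsPrimitiveRoot q N) {i : ℤ} {m : ℕ} (hm : 0 < m)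
    (hmN : m < N) : loweringCoeff q i m = 0 ↔ (N : ℤ) ∣ 2 * i - m + 1 := by
  rw [loweringCoeff, mul_eq_zero, or_iff_right (gauss_inv_ne_zero hq hm hmN), sub_eq_zero,
    eq_comm, hq.zpow_eq_one_iff_dvd]

lemma IsWeightVector.F_smul_E_pow_smul [NeZero n] [NeZero q] {i : ℤ} {ε : kˣ} {x : M}
    (hx : IsWeightVector n q i ε x) (m : ℕ) :
    𝐅 • 𝐄 ^ m • x =
      q⁻¹ ^ m • 𝐄 ^ m • 𝐅 • x + loweringCoeff q i m • 𝐄 ^ (m - 1) • x := by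
  cases m with
  | zero => simp [loweringCoeff_zero]
  | succ m =>
    have hexp : q ^ (2 * i - (m + 1 : ℕ) + 1) = q⁻¹ ^ m * q ^ (2 * i) := by
      rw [inv_pow, ← zpow_natCast q m, ← zpow_neg, ← zpow_add₀ (NeZero.ne q)]
      congr 1
      push_cast
      ring
    rw [← mul_smul, mul_pow_succ_of_skew_comm F_mul_E L_mul_E, add_smul, smul_assoc, smul_assoc,
      mul_smul, mul_smul, sub_smul, one_smul, smul_assoc, hx.L_smul, smul_sub, smul_smul (q⁻¹ ^ m),
      smul_algebra_smul_comm _ (𝐄 ^ m), Nat.add_sub_cancel, loweringCoeff, hexp,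
      mul_smul (gauss k q⁻¹ (m + 1)), sub_smul, one_smul, mul_smul (q⁻¹ ^ m)]

end Weights

/-! ### The submodule generated by a primitive vector -/

lemma pow_smul_eq_zero_of_le {R M : Type*} [Monoid R] [AddMonoid M] [DistribMulAction R M]
    {r : R} {x : M} {l m : ℕ} (hx : r ^ l • x = 0) (hlm : l ≤ m) : r ^ m • x = 0 := by
  rw [← Nat.sub_add_cancel hlm, pow_add, mul_smul, hx, smul_zero]

lemma linearIndependent_pow_smul {A M : Type*} [Ring A] [Algebra k A] [AddCommGroup M] [Module k M]
    [Module A M] [IsScalarTower k A M] {a : A} {x : M} {d : ℕ} (hd : a ^ d • x = 0)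
    (hx : a ^ (d - 1) • x ≠ 0) : LinearIndependent k (fun m : Fin d => a ^ (m : ℕ) • x) := by
  rw [Fintype.linearIndependent_iff]
  intro c hc m
  induction m using WellFoundedLT.induction with
  | ind m ih =>
    have hsum := congrArg (a ^ (d - 1 - m) • ·) hc
    simp only [Finset.smul_sum, smul_zero] at hsum
    rw [Finset.sum_eq_single m] at hsum
    · rw [smul_algebra_smul_comm, ← mul_smul, ← pow_add, Nat.sub_add_cancel (by omega)] at hsum
      exact (smul_eq_zero.1 hsum).resolve_right hx
    · intro j _ hjm
      obtain hlt | hgt := hjm.lt_or_gt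
      · rw [ih j hlt, zero_smul, smul_zero]
      · rw [smul_algebra_smul_comm, ← mul_smul, ← pow_add,
          pow_smul_eq_zero_of_le hd (by omega), smul_zero]
    · exact fun hm => (hm (Finset.mem_univ m)).elim

section Cyclic

variable {M : Type*} [AddCommGroup M] [Module (U k n q) M]

lemma E_pow_sq_smul (x : M) : 𝐄 ^ n ^ 2 • x = 0 := by rw [E_pow_sq, zero_smul]

lemma exists_F_pow_smul_ne_zero {z : M} (hz : z ≠ 0) :
    ∃ t : ℕ, 𝐅 ^ t • z ≠ 0 ∧ 𝐅 • 𝐅 ^ t • z = 0 := by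
  classical
  have hex : ∃ t : ℕ, 𝐅 ^ t • z = 0 := ⟨n ^ 2, by rw [F_pow_sq, zero_smul]⟩
  have hpos : Nat.find hex ≠ 0 := fun h => hz <| by
    simpa only [h, pow_zero, one_smul] using Nat.find_spec hex
  refine ⟨Nat.find hex - 1, Nat.find_min hex (by omega), ?_⟩
  rw [← mul_smul, ← pow_succ', Nat.sub_add_cancel (by omega)]
  exact Nat.find_spec hex

variable [Module k M] [IsScalarTower k (U k n q) M]

lemma smul_mem_span_of_generators {s : Set M}
    (hK : ∀ x ∈ s, 𝐊 • x ∈ Submodule.span k s) (hKh : ∀ x ∈ s, 𝐊h • x ∈ Submodule.span k s)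
    (hE : ∀ x ∈ s, 𝐄 • x ∈ Submodule.span k s) (hF : ∀ x ∈ s, 𝐅 • x ∈ Submodule.span k s)
    (u : U k n q) {x : M} (hx : x ∈ Submodule.span k s) : u • x ∈ Submodule.span k s := by
  have extend {v : U k n q} (hv : ∀ y ∈ s, v • y ∈ Submodule.span k s) :
      ∀ y ∈ Submodule.span k s, v • y ∈ Submodule.span k s := fun y hy =>
    Submodule.span_le (p := (Submodule.span k s).comap (Algebra.lsmul k k M v)).2 hv hy
  induction u using U_induction generalizing x with
  | algebraMap c => rw [algebraMap_smul]; exact Submodule.smul_mem _ c hx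
  | K => exact extend hK x hx
  | Kh => exact extend hKh x hx
  | E => exact extend hE x hx
  | F => exact extend hF x hx
  | add u v hu hv => rw [add_smul]; exact add_mem (hu hx) (hv hx)
  | mul u v hu hv => rw [mul_smul]; exact hu (hv hx)

namespace IsPrimitiveVector

variable [NeZero n] [NeZero q] {i : ℤ} {ε : kˣ} {x : M} {d : ℕ}

lemma F_smul_E_pow_smul (hx : IsPrimitiveVector n q i ε x) (m : ℕ) :
    𝐅 • 𝐄 ^ m • x = loweringCoeff q i m • 𝐄 ^ (m - 1) • x := by
  rw [hx.toIsWeightVector.F_smul_E_pow_smul, hx.F_smul, smul_zero, smul_zero, zero_add]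

lemma exists_smul_eq_sum (hx : IsPrimitiveVector n q i ε x) (hd : 𝐄 ^ d • x = 0) (u : U k n q) :
    ∃ c : ℕ → k, u • x = ∑ m ∈ Finset.range d, c m • 𝐄 ^ m • x := by
  have hmem (m : ℕ) :
      𝐄 ^ m • x ∈ Submodule.span k (Set.range fun m : Fin d => 𝐄 ^ (m : ℕ) • x) := by
    obtain hm | hm := lt_or_ge m d
    · exact Submodule.subset_span ⟨⟨m, hm⟩, rfl⟩
    · rw [pow_smul_eq_zero_of_le hd hm]
      exact zero_mem _
  have hux := smul_mem_span_of_generators (k := k) (n := n) (q := q)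
    (s := Set.range fun m : Fin d => 𝐄 ^ (m : ℕ) • x) (Set.forall_mem_range.2 fun m => ?_)
    (Set.forall_mem_range.2 fun m => ?_) (Set.forall_mem_range.2 fun m => ?_)
    (Set.forall_mem_range.2 fun m => ?_) u (x := x) (by simpa using hmem 0)
  · obtain ⟨c, hc⟩ := (Submodule.mem_span_range_iff_exists_fun k).1 hux
    refine ⟨fun m => if hm : m < d then c ⟨m, hm⟩ else 0, ?_⟩
    simp only [Finset.sum_range, Fin.is_lt, dite_true, hc]
  · rw [(hx.toIsWeightVector.E_pow_smul m).K_smul]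
    exact Submodule.smul_mem _ _ (hmem m)
  · rw [(hx.toIsWeightVector.E_pow_smul m).Kh_smul]
    exact Submodule.smul_mem _ _ (hmem m)
  · rw [← mul_smul, ← pow_succ']
    exact hmem _
  · rw [hx.F_smul_E_pow_smul]
    exact Submodule.smul_mem _ _ (hmem _)

lemma F_smul_sum (hx : IsPrimitiveVector n q i ε x) (hd : loweringCoeff q i d = 0) (c : ℕ → k) :
    𝐅 • ∑ m ∈ Finset.range d, c m • 𝐄 ^ m • x =
      ∑ m ∈ Finset.range d, (c (m + 1) * loweringCoeff q i (m + 1)) • 𝐄 ^ m • x := by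
  have hterm (m : ℕ) : 𝐅 • c m • 𝐄 ^ m • x = (c m * loweringCoeff q i m) • 𝐄 ^ (m - 1) • x := by
    rw [smul_algebra_smul_comm, hx.F_smul_E_pow_smul, smul_smul]
  simp only [Finset.smul_sum, hterm]
  cases d with
  | zero => rfl
  | succ d =>
    rw [Finset.sum_range_succ', Finset.sum_range_succ, hd, loweringCoeff_zero, mul_zero, mul_zero,
      zero_smul, zero_smul]
    rfl

lemma coeff_eq_zero_of_sum_eq_F_smul (hx : IsPrimitiveVector n q i ε x) (hEd : 𝐄 ^ d • x = 0)
    (hxd : 𝐄 ^ (d - 1) • x ≠ 0) (hd : loweringCoeff q i d = 0) {b : ℕ → k} {u : U k n q}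
    (hb : ∑ m ∈ Finset.range d, b m • 𝐄 ^ m • x = 𝐅 • u • x) {m : ℕ} (hmd : m < d)
    (hm : loweringCoeff q i (m + 1) = 0) : b m = 0 := by
  obtain ⟨c, hc⟩ := hx.exists_smul_eq_sum hEd u
  have hli := Fintype.linearIndependent_iff.1 (linearIndependent_pow_smul hEd hxd)
    (fun m => b m - c (m + 1) * loweringCoeff q i (m + 1)) ?_ ⟨m, hmd⟩
  · simpa only [hm, mul_zero, sub_zero] using hli
  · simp only [sub_smul, Finset.sum_sub_distrib]
    rw [sub_eq_zero, ← Finset.sum_range (fun m => b m • 𝐄 ^ m • x), hb, hc, hx.F_smul_sum hd,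
      Finset.sum_range]

lemma exists_smul_eq_sum_of_F_smul_eq_zero (hx : IsPrimitiveVector n q i ε x)
    (hEd : 𝐄 ^ d • x = 0) (hxd : 𝐄 ^ (d - 1) • x ≠ 0) (hd : loweringCoeff q i d = 0)
    {u : U k n q} (hu : 𝐅 • u • x = 0) :
    ∃ c : ℕ → k, u • x = ∑ m ∈ Finset.range d, c m • 𝐄 ^ m • x ∧
      ∀ m < d, loweringCoeff q i m ≠ 0 → c m = 0 := by
  obtain ⟨c, hc⟩ := hx.exists_smul_eq_sum hEd u
  refine ⟨c, hc, fun m hmd hm => ?_⟩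
  rw [hc, hx.F_smul_sum hd, Finset.sum_range] at hu
  have hli := Fintype.linearIndependent_iff.1 (linearIndependent_pow_smul hEd hxd) _ hu
  cases m with
  | zero => exact (hm (loweringCoeff_zero i)).elim
  | succ m => exact (mul_eq_zero.1 (hli ⟨m, by omega⟩)).resolve_right hm

end IsPrimitiveVector

end Cyclic

/-! ### Generators of simple and projective modules -/

lemma loweringCoeff_neg_eq_zero_iff {N : ℕ} (hq : IsPrimitiveRoot q N) {i m : ℕ} (hi : 1 ≤ i)
    (hiN : 2 * i ≤ N) (hm : 0 < m) (hmN : m < N) :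
    loweringCoeff q (-i) m = 0 ↔ m = N - 2 * i + 1 := by
  rw [loweringCoeff_eq_zero_iff hq hm hmN]
  constructor
  · intro hdvd
    have := Int.eq_zero_of_abs_lt_dvd (dvd_add_self_right.2 hdvd) (by rw [abs_lt]; omega)
    omega
  · rintro rfl
    exact ⟨-1, by omega⟩

lemma loweringCoeff_sub_one_eq_zero_iff {N : ℕ} (hq : IsPrimitiveRoot q N) {i m : ℕ} (hi : 1 ≤ i)
    (hiN : 2 * i ≤ N) (hm : 0 < m) (hmN : m < N) :
    loweringCoeff q (i - 1) m = 0 ↔ m = 2 * i - 1 := by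
  rw [loweringCoeff_eq_zero_iff hq hm hmN]
  constructor
  · intro hdvd
    have := Int.eq_zero_of_abs_lt_dvd hdvd (by rw [abs_lt]; omega)
    omega
  · rintro rfl
    exact ⟨0, by omega⟩

lemma sum_range_single_smul {M : Type*} [AddCommGroup M] [Module k M] (f : ℕ → M) {j d : ℕ}
    (hj : j < d) (c : k) : ∑ m ∈ Finset.range d, (Pi.single j c : ℕ → k) m • f m = c • f j := by
  simp only [Pi.single_apply, ite_smul, zero_smul, Finset.sum_ite_eq', Finset.mem_range, hj,
    if_true]

/-- The data carried by a generator of the simple module `S_{2i,j}`, where `ε = (-1) ^ (i + j)`: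
such a module has the basis `E ^ m • s`, `m ≤ n² - 2i`. -/
structure IsSimpleGenerator {M : Type*} [AddCommGroup M] [Module k M] (n : ℕ) (q : k)
    [Module (U k n q) M] (i : ℕ) (ε : kˣ) (s : M) : Prop extends
    IsPrimitiveVector n q (-i) ε s where
  one_le : 1 ≤ i
  two_mul_le : 2 * i ≤ n ^ 2
  E_pow_smul_eq_zero : E k n q ^ (n ^ 2 - 2 * i + 1) • s = 0
  E_pow_smul_ne_zero : E k n q ^ (n ^ 2 - 2 * i) • s ≠ 0

/-- The data carried by the generator `g = γ_{2i,j}` of `P_{2i,j}` and by `a = α_{2i,j}`, where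
`ε = (-1) ^ (i + j)`: such a module has the basis `E ^ m • g`, `E ^ m • a`, `m < n²`. -/
structure IsProjectiveGenerator {M : Type*} [AddCommGroup M] [Module k M] (n : ℕ) (q : k)
    [Module (U k n q) M] (i : ℕ) (ε : kˣ) (g a : M) : Prop where
  one_le : 1 ≤ i
  two_mul_le : 2 * i ≤ n ^ 2
  gen : IsWeightVector n q (-i) ε g
  prim : IsPrimitiveVector n q (i - 1) ε a
  F_smul_gen : F k n q • g = E k n q ^ (2 * i - 2) • a
  E_pow_smul_ne_zero : E k n q ^ (n ^ 2 - 1) • a ≠ 0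

section Generators

variable {M : Type*} [AddCommGroup M] [Module k M] [Module (U k n q) M] {i : ℕ} {ε : kˣ}

namespace IsSimpleGenerator

variable {s : M}

lemma ne_zero (hs : IsSimpleGenerator n q i ε s) : s ≠ 0 := fun h =>
  hs.E_pow_smul_ne_zero (by rw [h, smul_zero])

variable [IsScalarTower k (U k n q) M]

lemma linearIndependent (hs : IsSimpleGenerator n q i ε s) :
    LinearIndependent k (fun m : Fin (n ^ 2 - 2 * i + 1) => 𝐄 ^ (m : ℕ) • s) :=
  linearIndependent_pow_smul hs.E_pow_smul_eq_zero hs.E_pow_smul_ne_zero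

variable [NeZero n] [NeZero q]

lemma exists_eq_smul_of_F_smul_eq_zero (hs : IsSimpleGenerator n q i ε s)
    (hq : IsPrimitiveRoot q (n ^ 2)) {u : U k n q} (hu : 𝐅 • u • s = 0) :
    ∃ c : k, u • s = c • s := by
  have hi := hs.one_le
  have hiN := hs.two_mul_le
  obtain ⟨c, hc, hc0⟩ := hs.exists_smul_eq_sum_of_F_smul_eq_zero hs.E_pow_smul_eq_zero
    hs.E_pow_smul_ne_zero
    ((loweringCoeff_neg_eq_zero_iff hq hi hiN (Nat.succ_pos _) (by omega)).2 rfl) hu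
  refine ⟨c 0, ?_⟩
  rw [hc, Finset.sum_eq_single_of_mem 0 (Finset.mem_range.2 (Nat.succ_pos _)), pow_zero, one_smul]
  intro m hm hm0
  rw [Finset.mem_range] at hm
  rw [hc0 m hm, zero_smul]
  rw [Ne, loweringCoeff_neg_eq_zero_iff hq hi hiN (by omega) (by omega)]
  omega

lemma isAtom_span (hs : IsSimpleGenerator n q i ε s) (hq : IsPrimitiveRoot q (n ^ 2)) :
    IsAtom (Submodule.span (U k n q) {s}) := by
  refine ⟨by simpa only [Ne, Submodule.span_singleton_eq_bot] using hs.ne_zero, fun T hT => ?_⟩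
  by_contra hne
  obtain ⟨z, hz, hz0⟩ := (Submodule.ne_bot_iff T).1 hne
  obtain ⟨t, hz0, hFz⟩ := exists_F_pow_smul_ne_zero (k := k) (n := n) (q := q) hz0
  replace hz := T.smul_mem (𝐅 ^ t) hz
  obtain ⟨u, hu⟩ := Submodule.mem_span_singleton.1 (hT.le hz)
  rw [← hu] at hz hz0 hFz
  obtain ⟨c, hc⟩ := hs.exists_eq_smul_of_F_smul_eq_zero hq hFz
  rw [hc] at hz hz0
  have hc0 : c ≠ 0 := fun h => hz0 (by rw [h, zero_smul])
  refine hT.not_ge ((Submodule.span_singleton_le_iff_mem _ _).2 ?_)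
  simpa only [smul_smul, inv_mul_cancel₀ hc0, one_smul] using T.smul_of_tower_mem c⁻¹ hz

end IsSimpleGenerator

namespace IsProjectiveGenerator

variable {g a : M}

lemma one_lt_sq (hg : IsProjectiveGenerator n q i ε g a) : 1 < n ^ 2 := by
  have := hg.one_le
  have := hg.two_mul_le
  omega

lemma loweringCoeff_gen_eq_zero (hg : IsProjectiveGenerator n q i ε g a)
    (hq : IsPrimitiveRoot q (n ^ 2)) : loweringCoeff q (-i) (n ^ 2 - 2 * i + 1) = 0 := by
  have hi := hg.one_le
  have hiN := hg.two_mul_le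
  exact (loweringCoeff_neg_eq_zero_iff hq hi hiN (by omega) (by omega)).2 rfl

variable [NeZero n] [NeZero q] [IsScalarTower k (U k n q) M]

lemma isSimpleGenerator (hg : IsProjectiveGenerator n q i ε g a)
    (hq : IsPrimitiveRoot q (n ^ 2)) : IsSimpleGenerator n q i ε (𝐄 ^ (2 * i - 1) • a) := by
  have hi := hg.one_le
  have hiN := hg.two_mul_le
  have hweight : ((i : ℤ) - 1) - (2 * i - 1 : ℕ) = -i := by omega
  refine ⟨⟨hweight ▸ hg.prim.toIsWeightVector.E_pow_smul _, ?_⟩, hi, hiN, ?_, ?_⟩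
  · rw [hg.prim.F_smul_E_pow_smul,
      (loweringCoeff_sub_one_eq_zero_iff hq hi hiN (by omega) (by omega)).2 rfl, zero_smul]
  · rw [← mul_smul, ← pow_add, show n ^ 2 - 2 * i + 1 + (2 * i - 1) = n ^ 2 by omega,
      E_pow_sq_smul]
  · rw [← mul_smul, ← pow_add, show n ^ 2 - 2 * i + (2 * i - 1) = n ^ 2 - 1 by omega]
    exact hg.E_pow_smul_ne_zero

lemma F_smul_E_pow_smul_gen (hg : IsProjectiveGenerator n q i ε g a)
    (hq : IsPrimitiveRoot q (n ^ 2)) :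
    𝐅 • 𝐄 ^ (n ^ 2 - 2 * i + 1) • g =
      q⁻¹ ^ (n ^ 2 - 2 * i + 1) • 𝐄 ^ (n ^ 2 - 1) • a := by
  have hi := hg.one_le
  have hiN := hg.two_mul_le
  rw [hg.gen.F_smul_E_pow_smul, hg.loweringCoeff_gen_eq_zero hq, zero_smul, add_zero,
    hg.F_smul_gen, ← mul_smul (𝐄 ^ _), ← pow_add,
    show n ^ 2 - 2 * i + 1 + (2 * i - 2) = n ^ 2 - 1 by omega]

-- Applying `F` to `E ^ (n² - 2i + 1) • g` gives a multiple of `E ^ (n² - 1) • a`, which never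
-- occurs in `F • u • a`.
lemma E_pow_smul_notMem_span (hg : IsProjectiveGenerator n q i ε g a)
    (hq : IsPrimitiveRoot q (n ^ 2)) :
    𝐄 ^ (n ^ 2 - 2 * i + 1) • g ∉ Submodule.span (U k n q) {a} := by
  have hN := hg.one_lt_sq
  have hlast := loweringCoeff_eq_zero_of_eq hN hq (i - 1)
  intro hmem
  obtain ⟨u, hu⟩ := Submodule.mem_span_singleton.1 hmem
  have hcoeff := hg.prim.coeff_eq_zero_of_sum_eq_F_smul (E_pow_sq_smul a) hg.E_pow_smul_ne_zero
    hlast (b := Pi.single (n ^ 2 - 1) (q⁻¹ ^ (n ^ 2 - 2 * i + 1))) (u := u)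
    (by rw [sum_range_single_smul _ (by omega), hu, hg.F_smul_E_pow_smul_gen hq])
    (m := n ^ 2 - 1) (by omega) (by rwa [Nat.sub_add_cancel (by omega)])
  rw [Pi.single_eq_same] at hcoeff
  exact pow_ne_zero _ (inv_ne_zero (NeZero.ne q)) hcoeff

end IsProjectiveGenerator

end Generators

/-! ### The structure of the projective modules -/

lemma exists_eq_sum_add_smul_of_mkQ_eq {M : Type*} [AddCommGroup M] [Module k M]
    [Module (U k n q) M] [IsScalarTower k (U k n q) M] {g a z : M} {d : ℕ} {x : ℕ → k}
    (hz : (Submodule.span (U k n q) {a}).mkQ z =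
      ∑ m ∈ Finset.range d, x m • 𝐄 ^ m • (Submodule.span (U k n q) {a}).mkQ g) :
    ∃ v : U k n q, z = ∑ m ∈ Finset.range d, x m • 𝐄 ^ m • g + v • a := by
  have hmem : z - ∑ m ∈ Finset.range d, x m • 𝐄 ^ m • g ∈ Submodule.span (U k n q) {a} := by
    rw [← Submodule.ker_mkQ (Submodule.span (U k n q) {a}), LinearMap.mem_ker, map_sub, hz,
      map_sum, sub_eq_zero]
    simp only [LinearMap.map_smul_of_tower, map_smul]
  obtain ⟨v, hv⟩ := Submodule.mem_span_singleton.1 hmem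
  exact ⟨v, by rw [hv, add_sub_cancel]⟩

namespace IsProjectiveGenerator

variable {M : Type*} [AddCommGroup M] [Module k M] [Module (U k n q) M]
  [IsScalarTower k (U k n q) M] {i : ℕ} {ε : kˣ} {g a : M}

lemma mkQ_gen (hg : IsProjectiveGenerator n q i ε g a) :
    IsPrimitiveVector n q (-i) ε ((Submodule.span (U k n q) {a}).mkQ g) := by
  refine ⟨hg.gen.map _, ?_⟩
  rw [← map_smul, hg.F_smul_gen, Submodule.mkQ_apply, Submodule.Quotient.mk_eq_zero]
  exact Submodule.smul_mem _ _ (Submodule.mem_span_singleton_self a)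

variable [NeZero n] [NeZero q]

lemma E_pow_smul_mkQ_gen_ne_zero (hg : IsProjectiveGenerator n q i ε g a)
    (hq : IsPrimitiveRoot q (n ^ 2)) :
    𝐄 ^ (n ^ 2 - 1) • (Submodule.span (U k n q) {a}).mkQ g ≠ 0 := by
  have hi := hg.one_le
  have hiN := hg.two_mul_le
  suffices ∀ t ≤ 2 * i - 2,
      𝐄 ^ (n ^ 2 - 2 * i + 1 + t) • (Submodule.span (U k n q) {a}).mkQ g ≠ 0 by
    simpa only [show n ^ 2 - 2 * i + 1 + (2 * i - 2) = n ^ 2 - 1 by omega] using this _ le_rfl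
  intro t ht
  induction t with
  | zero =>
    rw [← map_smul, Submodule.mkQ_apply, Ne, Submodule.Quotient.mk_eq_zero]
    exact hg.E_pow_smul_notMem_span hq
  | succ t ih =>
    intro h
    have hF := hg.mkQ_gen.F_smul_E_pow_smul (n ^ 2 - 2 * i + 1 + (t + 1))
    rw [h, smul_zero, eq_comm, smul_eq_zero,
      loweringCoeff_neg_eq_zero_iff hq hi hiN (by omega) (by omega)] at hF
    exact hF.elim (by omega) (ih (by omega))

lemma exists_smul_eq_sum_add_sum (hg : IsProjectiveGenerator n q i ε g a) (u : U k n q) :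
    ∃ x y : ℕ → k, u • g = ∑ m ∈ Finset.range (n ^ 2), x m • 𝐄 ^ m • g +
      ∑ m ∈ Finset.range (n ^ 2), y m • 𝐄 ^ m • a := by
  obtain ⟨x, hx⟩ := hg.mkQ_gen.exists_smul_eq_sum (E_pow_sq_smul _) u
  rw [← map_smul] at hx
  obtain ⟨v, hv⟩ := exists_eq_sum_add_smul_of_mkQ_eq hx
  obtain ⟨y, hy⟩ := hg.prim.exists_smul_eq_sum (E_pow_sq_smul a) v
  exact ⟨x, y, by rw [hv, hy]⟩

lemma linearIndependent (hg : IsProjectiveGenerator n q i ε g a)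
    (hq : IsPrimitiveRoot q (n ^ 2)) :
    LinearIndependent k (Sum.elim (fun m : Fin (n ^ 2) => 𝐄 ^ (m : ℕ) • g)
      (fun m : Fin (n ^ 2) => 𝐄 ^ (m : ℕ) • a)) := by
  rw [Fintype.linearIndependent_iff]
  intro c hc
  simp only [Fintype.sum_sum_type, Sum.elim_inl, Sum.elim_inr] at hc
  have hinl : ∀ m, c (Sum.inl m) = 0 := by
    refine Fintype.linearIndependent_iff.1 (linearIndependent_pow_smul (E_pow_sq_smul _)
      (hg.E_pow_smul_mkQ_gen_ne_zero hq)) _ ?_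
    have ha (m : ℕ) : (Submodule.span (U k n q) {a}).mkQ (𝐄 ^ m • a) = 0 := by
      rw [Submodule.mkQ_apply, Submodule.Quotient.mk_eq_zero]
      exact Submodule.smul_mem _ _ (Submodule.mem_span_singleton_self a)
    simpa only [map_add, map_sum, LinearMap.map_smul_of_tower, ha, smul_zero,
      Finset.sum_const_zero, add_zero, map_zero, map_smul] using
      congrArg (Submodule.span (U k n q) {a}).mkQ hc
  simp only [hinl, zero_smul, Finset.sum_const_zero, zero_add] at hc
  exact Sum.rec hinl <| Fintype.linearIndependent_iff.1
    (linearIndependent_pow_smul (E_pow_sq_smul a) hg.E_pow_smul_ne_zero) _ hc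

lemma eq_zero_of_F_smul_add_eq_zero (hg : IsProjectiveGenerator n q i ε g a)
    (hq : IsPrimitiveRoot q (n ^ 2)) {c d : k} {v : U k n q}
    (h : 𝐅 • (c • g + d • 𝐄 ^ (n ^ 2 - 2 * i + 1) • g + v • a) = 0) : c = 0 ∧ d = 0 := by
  have hi := hg.one_le
  have hiN := hg.two_mul_le
  have hlast := loweringCoeff_eq_zero_of_eq hg.one_lt_sq hq (i - 1)
  rw [smul_add, smul_add, smul_algebra_smul_comm, smul_algebra_smul_comm, hg.F_smul_gen,
    hg.F_smul_E_pow_smul_gen hq, add_eq_zero_iff_eq_neg, ← smul_neg, ← neg_smul] at h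
  have hcoeff {m : ℕ} := hg.prim.coeff_eq_zero_of_sum_eq_F_smul (E_pow_sq_smul a)
    hg.E_pow_smul_ne_zero hlast (u := -v) (m := m)
    (b := Pi.single (2 * i - 2) c + Pi.single (n ^ 2 - 1) (d * q⁻¹ ^ (n ^ 2 - 2 * i + 1))) <| by
      simp only [Pi.add_apply, add_smul, Finset.sum_add_distrib]
      rw [sum_range_single_smul _ (by omega), sum_range_single_smul _ (by omega), mul_smul, ← h]
  have hc := hcoeff (m := 2 * i - 2) (by omega) <|
    (loweringCoeff_sub_one_eq_zero_iff hq hi hiN (by omega) (by omega)).2 (by omega)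
  have hd := hcoeff (m := n ^ 2 - 1) (by omega) (by rwa [Nat.sub_add_cancel (by omega)])
  rw [Pi.add_apply, Pi.single_eq_same, Pi.single_eq_of_ne (by omega), add_zero] at hc
  rw [Pi.add_apply, Pi.single_eq_same, Pi.single_eq_of_ne (by omega), zero_add] at hd
  exact ⟨hc, (mul_eq_zero.1 hd).resolve_right (pow_ne_zero _ (inv_ne_zero (NeZero.ne q)))⟩

lemma exists_smul_eq_of_F_smul_eq_zero (hg : IsProjectiveGenerator n q i ε g a)
    (hq : IsPrimitiveRoot q (n ^ 2)) {u : U k n q} (hu : 𝐅 • u • g = 0) :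
    ∃ v : U k n q, u • g = v • a := by
  have hi := hg.one_le
  have hiN := hg.two_mul_le
  obtain ⟨x, hx, hx0⟩ := hg.mkQ_gen.exists_smul_eq_sum_of_F_smul_eq_zero (E_pow_sq_smul _)
    (hg.E_pow_smul_mkQ_gen_ne_zero hq) (loweringCoeff_eq_zero_of_eq hg.one_lt_sq hq _)
    (by rw [← map_smul, ← map_smul, hu, map_zero])
  rw [← map_smul] at hx
  obtain ⟨v, hv⟩ := exists_eq_sum_add_smul_of_mkQ_eq hx
  rw [Finset.sum_eq_add_of_mem 0 (n ^ 2 - 2 * i + 1) (Finset.mem_range.2 (by omega))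
    (Finset.mem_range.2 (by omega)) (by omega) ?_, pow_zero, one_smul] at hv
  · rw [hv] at hu ⊢
    obtain ⟨h0, hD⟩ := hg.eq_zero_of_F_smul_add_eq_zero hq hu
    exact ⟨v, by rw [h0, hD, zero_smul, zero_smul, zero_add, zero_add]⟩
  · rintro m hm ⟨hm0, hmi⟩
    rw [Finset.mem_range] at hm
    rw [hx0 m hm, zero_smul]
    rwa [Ne, loweringCoeff_neg_eq_zero_iff hq hi hiN (by omega) hm]

lemma exists_eq_smul_add_smul_of_F_smul_eq_zero (hg : IsProjectiveGenerator n q i ε g a)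
    (hq : IsPrimitiveRoot q (n ^ 2)) {u : U k n q} (hu : 𝐅 • u • g = 0) :
    ∃ c d : k, u • g = c • a + d • 𝐄 ^ (2 * i - 1) • a := by
  have hi := hg.one_le
  have hiN := hg.two_mul_le
  obtain ⟨v, hv⟩ := hg.exists_smul_eq_of_F_smul_eq_zero hq hu
  rw [hv] at hu ⊢
  obtain ⟨y, hy, hy0⟩ := hg.prim.exists_smul_eq_sum_of_F_smul_eq_zero (E_pow_sq_smul a)
    hg.E_pow_smul_ne_zero (loweringCoeff_eq_zero_of_eq hg.one_lt_sq hq _) hu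
  refine ⟨y 0, y (2 * i - 1), ?_⟩
  rw [hy, Finset.sum_eq_add_of_mem 0 (2 * i - 1) (Finset.mem_range.2 (by omega))
    (Finset.mem_range.2 (by omega)) (by omega), pow_zero, one_smul]
  rintro m hm ⟨hm0, hmi⟩
  rw [Finset.mem_range] at hm
  rw [hy0 m hm, zero_smul]
  rwa [Ne, loweringCoeff_sub_one_eq_zero_iff hq hi hiN (by omega) hm]

end IsProjectiveGenerator

section Socle

variable {M : Type*} [AddCommGroup M] [Module k M] [Module (U k n q) M]
  [IsScalarTower k (U k n q) M] [NeZero n] [NeZero q] {i : ℕ} {ε : kˣ} {g a : M}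

namespace IsProjectiveGenerator

lemma span_le_of_ne_bot (hg : IsProjectiveGenerator n q i ε g a) (hq : IsPrimitiveRoot q (n ^ 2))
    {T : Submodule (U k n q) M} (hT : T ≤ Submodule.span (U k n q) {g}) (hT0 : T ≠ ⊥) :
    Submodule.span (U k n q) {𝐄 ^ (2 * i - 1) • a} ≤ T := by
  have hi := hg.one_le
  have hiN := hg.two_mul_le
  suffices ∃ w ∈ T, w ∈ Submodule.span (U k n q) {𝐄 ^ (2 * i - 1) • a} ∧ w ≠ 0 by
    obtain ⟨w, hwT, hw, hw0⟩ := this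
    refine inf_eq_left.1 <| (((hg.isSimpleGenerator hq).isAtom_span hq).le_iff.1
      inf_le_left).resolve_left fun hbot => hw0 ?_
    exact (Submodule.mem_bot _).1 (hbot ▸ Submodule.mem_inf.2 ⟨hw, hwT⟩)
  obtain ⟨z, hz, hz0⟩ := (Submodule.ne_bot_iff T).1 hT0
  obtain ⟨t, hz0, hFz⟩ := exists_F_pow_smul_ne_zero (k := k) (n := n) (q := q) hz0
  replace hz := T.smul_mem (𝐅 ^ t) hz
  obtain ⟨u, hu⟩ := Submodule.mem_span_singleton.1 (hT hz)
  rw [← hu] at hz hz0 hFz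
  obtain ⟨c, d, hcd⟩ := hg.exists_eq_smul_add_smul_of_F_smul_eq_zero hq hFz
  obtain rfl | hc := eq_or_ne c 0
  · refine ⟨_, hz, ?_, hz0⟩
    rw [hcd, zero_smul, zero_add]
    exact Submodule.smul_of_tower_mem _ d (Submodule.mem_span_singleton_self _)
  · have hE : 𝐄 ^ (n ^ 2 - 1) • u • g = c • 𝐄 ^ (n ^ 2 - 1) • a := by
      rw [hcd, smul_add, smul_algebra_smul_comm, smul_algebra_smul_comm, ← mul_smul (𝐄 ^ _),
        ← pow_add, pow_smul_eq_zero_of_le (m := n ^ 2 - 1 + (2 * i - 1)) (E_pow_sq_smul a)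
          (by omega), smul_zero, add_zero]
    refine ⟨_, T.smul_mem (𝐄 ^ (n ^ 2 - 1)) hz, ?_, hE ▸ smul_ne_zero hc hg.E_pow_smul_ne_zero⟩
    rw [hE, show n ^ 2 - 1 = n ^ 2 - 2 * i + (2 * i - 1) by omega, pow_add, mul_smul]
    exact Submodule.smul_of_tower_mem _ c <|
      Submodule.smul_mem _ _ (Submodule.mem_span_singleton_self _)

lemma sSup_isSimpleModule_eq_span (hg : IsProjectiveGenerator n q i ε g a)
    (hq : IsPrimitiveRoot q (n ^ 2)) :
    sSup {T : Submodule (U k n q) M | T ≤ Submodule.span (U k n q) {g} ∧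
      IsSimpleModule (U k n q) T} = Submodule.span (U k n q) {𝐄 ^ (2 * i - 1) • a} := by
  have hatom := (hg.isSimpleGenerator hq).isAtom_span hq
  refine le_antisymm (sSup_le ?_) (le_sSup ⟨?_, isSimpleModule_iff_isAtom.2 hatom⟩)
  · rintro T ⟨hT, hTs⟩
    have hTatom : IsAtom T := isSimpleModule_iff_isAtom.1 hTs
    exact ((hTatom.le_iff.1 (hg.span_le_of_ne_bot hq hT hTatom.1)).resolve_left hatom.1).ge
  · have := hg.one_le
    rw [Submodule.span_singleton_le_iff_mem, show 2 * i - 1 = 1 + (2 * i - 2) by omega, pow_add,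
      mul_smul, ← hg.F_smul_gen]
    exact Submodule.smul_mem _ _ (Submodule.smul_mem _ _ (Submodule.mem_span_singleton_self _))

end IsProjectiveGenerator

end Socle

/-! ### Homomorphisms and bases -/

lemma exists_linearMap_apply_eq_of_span_eq_top {R M T : Type*} [Ring R] [AddCommGroup M]
    [Module R M] [AddCommGroup T] [Module R T] {x : M} {t : T} (hx : Submodule.span R {x} = ⊤)
    (h : ∀ r : R, r • x = 0 → r • t = 0) : ∃ Φ : M →ₗ[R] T, Φ x = t := by
  have hsurj : Function.Surjective (LinearMap.toSpanSingleton R M x) := by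
    rw [← LinearMap.range_eq_top, LinearMap.range_toSpanSingleton, hx]
  refine ⟨(Submodule.liftQ _ (LinearMap.toSpanSingleton R T t) h) ∘ₗ
    ((LinearMap.toSpanSingleton R M x).quotKerEquivOfSurjective hsurj).symm.toLinearMap, ?_⟩
  have hsymm : ((LinearMap.toSpanSingleton R M x).quotKerEquivOfSurjective hsurj).symm x =
      Submodule.Quotient.mk 1 := by
    rw [LinearEquiv.symm_apply_eq]
    exact (one_smul R x).symm
  rw [LinearMap.comp_apply, LinearEquiv.coe_coe, hsymm]
  exact one_smul R t

section Lift

variable {M T : Type*} [AddCommGroup M] [Module k M] [Module (U k n q) M]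
  [AddCommGroup T] [Module k T] [Module (U k n q) T] {ε : kˣ} {x : M} {t : T}

lemma IsWeightVector.prodMk {i : ℤ} (hx : IsWeightVector n q i ε x)
    (ht : IsWeightVector n q i ε t) : IsWeightVector n q i ε (x, t) :=
  ⟨by rw [Prod.smul_mk, hx.K_smul, ht.K_smul, Prod.smul_mk],
    by rw [Prod.smul_mk, hx.Kh_smul, ht.Kh_smul, Prod.smul_mk]⟩

lemma IsPrimitiveVector.prodMk {i : ℤ} (hx : IsPrimitiveVector n q i ε x)
    (ht : IsPrimitiveVector n q i ε t) : IsPrimitiveVector n q i ε (x, t) :=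
  ⟨hx.toIsWeightVector.prodMk ht.toIsWeightVector,
    by rw [Prod.smul_mk, hx.F_smul, ht.F_smul, Prod.mk_zero_zero]⟩

variable [IsScalarTower k (U k n q) M] [IsScalarTower k (U k n q) T] [NeZero n] [NeZero q] {i : ℕ}

lemma IsSimpleGenerator.exists_linearMap (hx : IsSimpleGenerator n q i ε x)
    (hspan : Submodule.span (U k n q) {x} = ⊤) (ht : IsPrimitiveVector n q (-i) ε t)
    (hEt : 𝐄 ^ (n ^ 2 - 2 * i + 1) • t = 0) : ∃ Φ : M →ₗ[U k n q] T, Φ x = t := by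
  refine exists_linearMap_apply_eq_of_span_eq_top hspan fun u hu => ?_
  obtain ⟨c, hc⟩ := (hx.toIsPrimitiveVector.prodMk ht).exists_smul_eq_sum
    (by rw [Prod.smul_mk, hx.E_pow_smul_eq_zero, hEt, Prod.mk_zero_zero]) u
  simp only [Prod.smul_mk, Prod.ext_iff, Prod.fst_sum, Prod.snd_sum, Finset.sum_range] at hc
  have hc0 := Fintype.linearIndependent_iff.1 hx.linearIndependent _ (hc.1.symm.trans hu)
  rw [hc.2, Finset.sum_eq_zero fun m _ => by rw [hc0 m, zero_smul]]

lemma IsProjectiveGenerator.exists_linearMap {a : M} {b : T}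
    (hx : IsProjectiveGenerator n q i ε x a) (hq : IsPrimitiveRoot q (n ^ 2))
    (hspan : Submodule.span (U k n q) {x} = ⊤) (ht : IsWeightVector n q (-i) ε t)
    (hb : IsPrimitiveVector n q (i - 1) ε b) (hFt : 𝐅 • t = 𝐄 ^ (2 * i - 2) • b) :
    ∃ Φ : M →ₗ[U k n q] T, Φ x = t := by
  refine exists_linearMap_apply_eq_of_span_eq_top hspan fun u hu => ?_
  have hprod : IsProjectiveGenerator n q i ε (x, t) (a, b) :=
    ⟨hx.one_le, hx.two_mul_le, hx.gen.prodMk ht, hx.prim.prodMk hb,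
      by rw [Prod.smul_mk, Prod.smul_mk, hx.F_smul_gen, hFt],
      fun h => hx.E_pow_smul_ne_zero (congrArg Prod.fst h)⟩
  obtain ⟨c, d, hcd⟩ := hprod.exists_smul_eq_sum_add_sum u
  simp only [Prod.smul_mk, Prod.ext_iff, Prod.fst_add, Prod.snd_add, Prod.fst_sum, Prod.snd_sum,
    Finset.sum_range, hu] at hcd
  have h0 := Fintype.linearIndependent_iff.1 (hx.linearIndependent hq)
    (Sum.elim (fun m => c m) (fun m => d m)) (by
      simpa only [Fintype.sum_sum_type, Sum.elim_inl, Sum.elim_inr] using hcd.1.symm)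
  rw [hcd.2, Finset.sum_eq_zero fun m _ => by rw [show c m = 0 from h0 (Sum.inl m), zero_smul],
    Finset.sum_eq_zero fun m _ => by rw [show d m = 0 from h0 (Sum.inr m), zero_smul], zero_add]

lemma IsSimpleGenerator.exists_basis (hx : IsSimpleGenerator n q i ε x)
    (hspan : Submodule.span (U k n q) {x} = ⊤) :
    ∃ b : Module.Basis (Fin (n ^ 2 - 2 * i + 1)) k M, ∀ m, b m = 𝐄 ^ (m : ℕ) • x := by
  refine ⟨Module.Basis.mk hx.linearIndependent ?_, fun m => by rw [Module.Basis.mk_apply]⟩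
  rintro z -
  obtain ⟨u, rfl⟩ := Submodule.mem_span_singleton.1 (hspan ▸ Submodule.mem_top : z ∈ _)
  obtain ⟨c, hc⟩ := hx.exists_smul_eq_sum hx.E_pow_smul_eq_zero u
  rw [hc, Finset.sum_range]
  exact Submodule.sum_mem _ fun m _ => Submodule.smul_mem _ _ (Submodule.subset_span ⟨m, rfl⟩)

lemma IsProjectiveGenerator.nonempty_basis {a : M} (hx : IsProjectiveGenerator n q i ε x a)
    (hq : IsPrimitiveRoot q (n ^ 2)) (hspan : Submodule.span (U k n q) {x} = ⊤) :
    Nonempty (Module.Basis (Fin (n ^ 2) ⊕ Fin (n ^ 2)) k M) := by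
  refine ⟨Module.Basis.mk (hx.linearIndependent hq) ?_⟩
  rintro z -
  obtain ⟨u, rfl⟩ := Submodule.mem_span_singleton.1 (hspan ▸ Submodule.mem_top : z ∈ _)
  obtain ⟨c, d, hcd⟩ := hx.exists_smul_eq_sum_add_sum u
  rw [hcd, Finset.sum_range, Finset.sum_range]
  exact add_mem
    (Submodule.sum_mem _ fun m _ => Submodule.smul_mem _ _ (Submodule.subset_span ⟨.inl m, rfl⟩))
    (Submodule.sum_mem _ fun m _ => Submodule.smul_mem _ _ (Submodule.subset_span ⟨.inr m, rfl⟩))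

end Lift

/-! ### The idempotents `e_{2i,j}` -/

lemma pow_smul_of_smul_eq {A M : Type*} [Ring A] [Algebra k A] [AddCommGroup M] [Module k M]
    [Module A M] [IsScalarTower k A M] {a : A} {c : k} {x : M} (hx : a • x = c • x) (m : ℕ) :
    a ^ m • x = c ^ m • x := by
  induction m with
  | zero => rw [pow_zero, pow_zero, one_smul, one_smul]
  | succ m ih => rw [pow_succ, mul_smul, hx, smul_algebra_smul_comm, ih, smul_smul, pow_succ']

lemma natCast_ne_zero_of_isPrimitiveRoot [NeZero n] (hq : IsPrimitiveRoot q (n ^ 2)) :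
    (n : k) ≠ 0 := by
  have := hq.neZero'
  exact fun h => NeZero.ne ((n ^ 2 : ℕ) : k) (by rw [Nat.cast_pow, h, zero_pow two_ne_zero])

lemma two_ne_zero_of_isPrimitiveRoot [NeZero n] (hq : IsPrimitiveRoot q (n ^ 2)) (h2 : 2 ∣ n) :
    (2 : k) ≠ 0 := by
  obtain ⟨p, hp⟩ := h2
  refine fun h => natCast_ne_zero_of_isPrimitiveRoot hq ?_
  rw [hp, Nat.cast_mul, Nat.cast_two, h, zero_mul]

lemma pow_mul_half_eq_neg_one [NeZero n] (hq : IsPrimitiveRoot q (n ^ 2)) (h2 : 2 ∣ n) :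
    q ^ (n * (n / 2)) = -1 :=
  (hq.pow (pow_pos (NeZero.pos n) 2)
    (by rw [mul_assoc, Nat.div_mul_cancel h2, sq])).eq_neg_one_of_two_right

variable (k n q) in
/-- The involution `K K̂^(n/2)`, whose eigenspaces `𝟙₀` and `𝟙₁` project onto. -/
def kappa : U k n q := 𝐊 * 𝐊h ^ (n / 2)

lemma commute_K_L : Commute 𝐊 (𝐋) :=
  ((Commute.refl 𝐊).pow_right (n - 1)).mul_right K_mul_Kh

lemma commute_kappa_L : Commute (kappa k n q) (𝐋) := by
  have hKh : Commute 𝐊h (𝐋) :=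
    ((show Commute 𝐊h 𝐊 from K_mul_Kh.symm).pow_right _).mul_right (Commute.refl _)
  exact commute_K_L.mul_left (hKh.pow_left _)

lemma L_pow_half (h2 : 2 ∣ n) : (𝐋) ^ (n ^ 2 / 2) = 1 := by
  have hKinvKh : Commute (Kinv k n q) 𝐊h := Commute.pow_left (show Commute 𝐊 𝐊h from K_mul_Kh) _
  have hKinv : Kinv k n q ^ n = 1 := by rw [Kinv, ← pow_mul, mul_comm, pow_mul, K_pow, one_pow]
  rw [sq, Nat.mul_div_assoc _ h2, hKinvKh.mul_pow, pow_mul 𝐊h, Kh_pow, ← Kinv, pow_mul, hKinv,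
    one_pow, one_mul, ← pow_mul, Nat.mul_div_cancel' h2, hKinv]

lemma oneJ_eq {j : ℕ} (hj : j ≤ 1) :
    oneJ k n q j = (2 : k)⁻¹ • (1 + (-1 : k) ^ j • kappa k n q) := by
  interval_cases j
  · rw [oneJ, if_pos rfl, pow_zero, one_smul, kappa]
  · rw [oneJ, if_neg one_ne_zero, pow_one, sub_eq_add_neg]
    exact congrArg (fun x => (2 : k)⁻¹ • (1 + x)) (neg_one_smul k (kappa k n q)).symm

lemma commute_kappa_phi (i : ℕ) : Commute (kappa k n q) (phi k n q i) :=
  .smul_right (.sum_right _ _ _ fun t _ => .smul_right (commute_kappa_L.pow_right t) _) _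

lemma oneJ_zero_add_oneJ_one (h : (2 : k) ≠ 0) : oneJ k n q 0 + oneJ k n q 1 = 1 := by
  rw [oneJ, oneJ, if_pos rfl, if_neg one_ne_zero, ← smul_add, add_add_sub_cancel, ← two_smul k,
    smul_smul, inv_mul_cancel₀ h, one_smul]

lemma oneJ_smul {M : Type*} [AddCommGroup M] [Module k M] [Module (U k n q) M]
    [IsScalarTower k (U k n q) M] {j : ℕ} {v : M} (h : (2 : k) ≠ 0) (hj : j ≤ 1)
    (hkappa : kappa k n q • v = (-1 : k) ^ j • v) :
    oneJ k n q j • v = v := by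
  rw [oneJ_eq hj, smul_assoc, add_smul, one_smul, smul_assoc, hkappa, smul_smul, ← mul_pow,
    neg_one_mul, neg_neg, one_pow, one_smul, ← two_smul k, smul_smul, inv_mul_cancel₀ h, one_smul]

lemma odd_one_add_half (h4 : 4 ∣ n) : Odd (1 + n / 2) := by
  obtain ⟨r, rfl⟩ := h4
  exact ⟨r, by omega⟩

lemma L_mul_phi [NeZero q] (hq : IsPrimitiveRoot q (n ^ 2)) (h2 : 2 ∣ n) (i : ℕ) :
    (𝐋) * phi k n q i = q ^ (2 * i) • phi k n q i := by
  have hphi : phi k n q i = ((n ^ 2 : k)⁻¹ * 2) • ∑ t ∈ Finset.range (n ^ 2 / 2),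
      (q⁻¹ ^ (2 * i) • (𝐋)) ^ t := by
    simp only [phi, smul_pow, ← pow_mul]
  have hpow : (q⁻¹ ^ (2 * i) • (𝐋)) ^ (n ^ 2 / 2) = 1 := by
    rw [smul_pow, L_pow_half h2, ← pow_mul, mul_right_comm,
      Nat.mul_div_cancel' (dvd_pow h2 two_ne_zero), pow_mul, hq.inv.pow_eq_one, one_pow, one_smul]
  have hgeom := mul_geom_sum (q⁻¹ ^ (2 * i) • (𝐋)) (n ^ 2 / 2)
  rw [hpow, sub_self, sub_mul, one_mul, sub_eq_zero, smul_mul_assoc, inv_pow,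
    inv_smul_eq_iff₀ (pow_ne_zero _ (NeZero.ne q))] at hgeom
  rw [hphi, mul_smul_comm, smul_comm, inv_pow, hgeom]

section Idempotents

variable [NeZero n]

lemma kappa_mul_kappa (h2 : 2 ∣ n) : kappa k n q * kappa k n q = 1 := by
  have hcomm : Commute 𝐊 (𝐊h ^ (n / 2)) := (show Commute 𝐊 𝐊h from K_mul_Kh).pow_right _
  rw [← sq, kappa, hcomm.mul_pow, ← pow_mul, Nat.div_mul_cancel h2, Kh_pow,
    ← ((Commute.refl 𝐊).pow_right (n - 1)).mul_pow, ← Kinv, K_mul_Kinv, one_pow]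

lemma kappa_eq_K_pow_mul : kappa k n q = 𝐊 ^ (1 + n / 2) * (𝐋) ^ (n / 2) := by
  rw [pow_add, pow_one, mul_assoc, ← commute_K_L.mul_pow, K_mul_L, kappa]

lemma kappa_pow (h4 : 4 ∣ n) : kappa k n q ^ (1 + n / 2) = 𝐊 * (𝐋) ^ (n / 2 * (1 + n / 2)) := by
  obtain ⟨r, hr⟩ := h4
  rw [kappa_eq_K_pow_mul, ((commute_K_L.pow_left _).pow_right _).mul_pow, ← pow_mul, ← pow_mul,
    show (1 + n / 2) * (1 + n / 2) = n * (1 + r) + 1 by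
      rw [hr, show 4 * r / 2 = 2 * r by omega]; ring,
    pow_succ, pow_mul, K_pow, one_pow, one_mul]

lemma kappa_mul_oneJ (h2 : 2 ∣ n) {j : ℕ} (hj : j ≤ 1) :
    kappa k n q * oneJ k n q j = (-1 : k) ^ j • oneJ k n q j := by
  have hsign : (-1 : k) ^ j * (-1) ^ j = 1 := by rw [← mul_pow, neg_one_mul, neg_neg, one_pow]
  rw [oneJ_eq hj, smul_comm ((-1 : k) ^ j) (2⁻¹ : k) (1 + _), smul_add ((-1 : k) ^ j), smul_smul,
    hsign, one_smul, mul_smul_comm, mul_add, mul_one, mul_smul_comm, kappa_mul_kappa h2, add_comm]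

lemma inv_sq_mul_two_mul_half (hq : IsPrimitiveRoot q (n ^ 2)) (h2 : 2 ∣ n) :
    (n ^ 2 : k)⁻¹ * 2 * ((n ^ 2 / 2 : ℕ) : k) = 1 := by
  have hdouble : (2 : k) * ((n ^ 2 / 2 : ℕ) : k) = n ^ 2 := by
    exact_mod_cast congrArg (Nat.cast (R := k)) (Nat.mul_div_cancel' (dvd_pow h2 two_ne_zero))
  rw [mul_assoc, hdouble,
    inv_mul_cancel₀ (pow_ne_zero _ (natCast_ne_zero_of_isPrimitiveRoot hq))]

lemma sum_phi (hq : IsPrimitiveRoot q (n ^ 2)) (h2 : 2 ∣ n) :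
    ∑ i ∈ Finset.range (n ^ 2 / 2), phi k n q i = 1 := by
  have hdouble : 2 * (n ^ 2 / 2) = n ^ 2 := Nat.mul_div_cancel' (dvd_pow h2 two_ne_zero)
  have hpos : 0 < n ^ 2 := pow_pos (NeZero.pos n) 2
  have horth {t : ℕ} (ht : t < n ^ 2 / 2) :
      ∑ i ∈ Finset.range (n ^ 2 / 2), q⁻¹ ^ (2 * i * t) =
        if t = 0 then ((n ^ 2 / 2 : ℕ) : k) else 0 := by
    split_ifs with h0
    · simp [h0]
    · have hne : q⁻¹ ^ (2 * t) ≠ 1 := hq.inv.pow_ne_one_of_pos_of_lt (by omega) (by omega)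
      have hpow : (q⁻¹ ^ (2 * t)) ^ (n ^ 2 / 2) = 1 := by
        rw [← pow_mul, mul_right_comm, hdouble, pow_mul, hq.inv.pow_eq_one, one_pow]
      simp only [mul_right_comm 2 _ t, pow_mul _ (2 * t), geom_sum_eq hne, hpow, sub_self, zero_div]
  simp only [phi]
  rw [← Finset.smul_sum, Finset.sum_comm]
  simp only [← Finset.sum_smul]
  rw [Finset.sum_eq_single_of_mem 0 (Finset.mem_range.2 (by omega)), horth (by omega), if_pos rfl,
    pow_zero, smul_smul, inv_sq_mul_two_mul_half hq h2, one_smul]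
  intro t ht h0
  rw [horth (Finset.mem_range.1 ht), if_neg h0, zero_smul]

lemma sum_eIdem (hq : IsPrimitiveRoot q (n ^ 2)) (h2 : 2 ∣ n) :
    ∑ i ∈ Finset.range (n ^ 2 / 2), ∑ j ∈ Finset.range 2, eIdem k n q i j = 1 := by
  simp only [eIdem, ← Finset.mul_sum, ← Finset.sum_mul]
  rw [sum_phi hq h2, one_mul, Finset.sum_range_succ, Finset.sum_range_one,
    oneJ_zero_add_oneJ_one (two_ne_zero_of_isPrimitiveRoot hq h2)]

lemma zpow_sign (hq : IsPrimitiveRoot q (n ^ 2)) (h2 : 2 ∣ n) (i : ℕ) :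
    q ^ (-(n * i) * (n / 2 : ℕ) : ℤ) = (-1) ^ i := by
  rw [show (-(n * i) * (n / 2 : ℕ) : ℤ) = ((n * (n / 2) : ℕ) : ℤ) * (-i : ℤ) by push_cast; ring,
    zpow_mul, zpow_natCast, pow_mul_half_eq_neg_one hq h2, zpow_neg, zpow_natCast, ← inv_pow,
    inv_neg_one]

variable [NeZero q]

section Smul

variable {M : Type*} [AddCommGroup M] [Module k M] [Module (U k n q) M]
  [IsScalarTower k (U k n q) M] {i j : ℕ} {v : M}

lemma IsWeightVector.kappa_smul (hv : IsWeightVector n q i ((-1) ^ (i + j)) v)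
    (hq : IsPrimitiveRoot q (n ^ 2)) (h4 : 4 ∣ n) : kappa k n q • v = (-1 : k) ^ j • v := by
  have h2 : 2 ∣ n := dvd_trans (by norm_num) h4
  rw [kappa_eq_K_pow_mul, mul_smul, pow_smul_of_smul_eq hv.L_smul, smul_algebra_smul_comm,
    pow_smul_of_smul_eq hv.K_smul, smul_smul]
  congr 1
  have hexp : (q ^ (2 * i : ℤ)) ^ (n / 2) * (q ^ (-(n * i) : ℤ)) ^ (1 + n / 2) = (-1) ^ i := by
    rw [← zpow_sign hq h2, ← zpow_natCast, ← zpow_natCast, ← zpow_mul, ← zpow_mul,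
      ← zpow_add₀ (NeZero.ne q)]
    congr 1
    push_cast [Int.natCast_ediv]
    obtain ⟨p, hp⟩ := h2
    rw [hp]
    push_cast
    rw [Int.mul_ediv_cancel_left _ two_ne_zero]
    ring
  push_cast
  rw [mul_pow, mul_left_comm, hexp, ← pow_mul, mul_comm (i + j), pow_mul,
    (odd_one_add_half h4).neg_one_pow, ← pow_add, show i + j + i = 2 * i + j by ring, pow_add,
    pow_mul, neg_one_sq, one_pow, one_mul]

lemma isWeightVector_of_L_smul_of_kappa_smul (hq : IsPrimitiveRoot q (n ^ 2)) (h4 : 4 ∣ n)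
    (hL : (𝐋) • v = q ^ (2 * i) • v) (hkappa : kappa k n q • v = (-1 : k) ^ j • v) :
    IsWeightVector n q i ((-1) ^ (i + j)) v := by
  have h2 : 2 ∣ n := dvd_trans (by norm_num) h4
  have hq0 : q ≠ 0 := NeZero.ne q
  have hK : 𝐊 • v = (((-1) ^ (i + j) : kˣ) * q ^ (-(n * i) : ℤ)) • v := by
    have hpow := pow_smul_of_smul_eq hkappa (1 + n / 2)
    rw [kappa_pow h4, mul_smul, pow_smul_of_smul_eq hL, smul_algebra_smul_comm, ← pow_mul,
      ← pow_mul, mul_comm j, pow_mul (-1 : k), (odd_one_add_half h4).neg_one_pow,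
      ← eq_inv_smul_iff₀ (pow_ne_zero _ hq0), smul_smul] at hpow
    rw [hpow]
    congr 1
    have hexp : (q ^ (2 * i * (n / 2 * (1 + n / 2))))⁻¹ = q ^ (-(n * i) : ℤ) * (-1) ^ i := by
      rw [← zpow_sign hq h2, ← zpow_add₀ hq0, ← zpow_natCast, ← zpow_neg]
      congr 1
      obtain ⟨p, hp⟩ := h2
      rw [hp, Nat.mul_div_cancel_left _ two_pos]
      push_cast
      ring
    rw [hexp]
    push_cast
    ring
  refine ⟨hK, ?_⟩
  rw [← K_mul_L, mul_smul, hL, smul_algebra_smul_comm, hK, smul_smul, mul_left_comm,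
    ← zpow_natCast q, ← zpow_add₀ hq0]
  congr 3
  push_cast
  ring

lemma isWeightVector_eIdem (hq : IsPrimitiveRoot q (n ^ 2)) (h4 : 4 ∣ n) (i : ℕ) {j : ℕ}
    (hj : j ≤ 1) : IsWeightVector n q i ((-1) ^ (i + j)) (eIdem k n q i j) := by
  have h2 : 2 ∣ n := dvd_trans (by norm_num) h4
  refine isWeightVector_of_L_smul_of_kappa_smul hq h4 ?_ ?_
  · rw [smul_eq_mul, eIdem, ← mul_assoc, L_mul_phi hq h2, smul_mul_assoc]
  · rw [smul_eq_mul, eIdem, ← mul_assoc, (commute_kappa_phi i).eq, mul_assoc, kappa_mul_oneJ h2 hj,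
      mul_smul_comm]

lemma phi_smul (hq : IsPrimitiveRoot q (n ^ 2)) (h2 : 2 ∣ n) (hL : (𝐋) • v = q ^ (2 * i) • v) :
    phi k n q i • v = v := by
  have hterm (t : ℕ) : (q⁻¹ ^ (2 * i * t) • (𝐋) ^ t) • v = v := by
    rw [smul_assoc, pow_smul_of_smul_eq hL, smul_smul, ← pow_mul, ← mul_pow,
      inv_mul_cancel₀ (NeZero.ne q), one_pow, one_smul]
  simp only [phi, smul_assoc, Finset.sum_smul]
  simp only [← smul_assoc, hterm]
  rw [Finset.sum_const, Finset.card_range, ← Nat.cast_smul_eq_nsmul k, smul_smul,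
    inv_sq_mul_two_mul_half hq h2, one_smul]

lemma IsWeightVector.eIdem_smul (hv : IsWeightVector n q i ((-1) ^ (i + j)) v)
    (hq : IsPrimitiveRoot q (n ^ 2)) (h4 : 4 ∣ n) (hj : j ≤ 1) : eIdem k n q i j • v = v := by
  have h2 : 2 ∣ n := dvd_trans (by norm_num) h4
  rw [eIdem, mul_smul, oneJ_smul (two_ne_zero_of_isPrimitiveRoot hq h2) hj (hv.kappa_smul hq h4),
    phi_smul hq h2 (by rw [hv.L_smul]; norm_cast)]

end Smul

end Idempotents

/-! ### A faithful module -/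

lemma U_exists_algHom {A : Type*} [Ring A] [Algebra k A] [NeZero n] {x y e f : A} (hx : x ^ n = 1)
    (hy : y ^ n = (x ^ (n - 1)) ^ 2) (hxy : x * y = y * x) (hxe : x * e = q ^ n • (e * x))
    (hxf : x * f = (q ^ n)⁻¹ • (f * x)) (hye : y * e = (q ^ n * (q ^ 2)⁻¹) • (e * y))
    (hyf : y * f = ((q ^ n)⁻¹ * q ^ 2) • (f * y)) (he : e ^ n ^ 2 = 0) (hf : f ^ n ^ 2 = 0)
    (hfe : f * e = q⁻¹ • (e * f) + (1 - x ^ (n - 1) * y)) :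
    ∃ ρ : U k n q →ₐ[k] A, ρ 𝐊 = x ∧ ρ 𝐊h = y ∧ ρ 𝐄 = e ∧ ρ 𝐅 = f := by
  have hxinv : x * x ^ (n - 1) = 1 := by rw [mul_pow_sub_one (NeZero.ne n), hx]
  have hyinv : y * y ^ (n ^ 2 - 1) = 1 := by
    rw [mul_pow_sub_one (pow_ne_zero 2 (NeZero.ne n)), sq n, pow_mul, hy, ← pow_mul, ← pow_mul,
      show (n - 1) * (2 * n) = n * ((n - 1) * 2) by ring, pow_mul, hx, one_pow]
  refine ⟨RingQuot.liftAlgHom k ⟨FreeAlgebra.lift k ![x, y, e, f], fun _ _ h => ?_⟩, ?_⟩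
  · cases h <;>
      simp only [map_mul, map_pow, map_smul, map_sub, map_one, map_zero, FreeAlgebra.lift_ι_apply,
        Matrix.cons_val]
    case Kord => exact hx
    case Khord => exact hy
    case KKh => exact hxy
    case KE => rw [hxe, smul_mul_assoc, mul_assoc, hxinv, mul_one]
    case KF => rw [hxf, smul_mul_assoc, mul_assoc, hxinv, mul_one]
    case KhE => rw [hye, smul_mul_assoc, mul_assoc, hyinv, mul_one]
    case KhF => rw [hyf, smul_mul_assoc, mul_assoc, hyinv, mul_one]
    case Enil => exact he
    case Fnil => exact hf
    case EF => rw [hfe, add_sub_cancel_left]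
  · simp [K, Kh, E, F]

variable (k) in
/-- The space underlying the cyclic module used to separate the elements of `u`. The basis vector
indexed by `(a, b)` plays the role of `F^a E^b v`, where `v` is a weight vector generating it. -/
abbrev BigModule (N : ℕ) := Fin N × Fin N →₀ k

namespace BigModule

variable {N : ℕ}

variable (k N) in
/-- The standard basis of `BigModule k N`, extended by `0` to all pairs of natural numbers. -/
def vec (a b : ℕ) : BigModule k N :=
  if h : a < N ∧ b < N then Finsupp.single (⟨a, h.1⟩, ⟨b, h.2⟩) 1 else 0

lemma vec_fin (a b : Fin N) : vec k N a b = Finsupp.single (a, b) 1 := dif_pos ⟨a.2, b.2⟩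

lemma vec_eq_zero {a b : ℕ} (h : ¬(a < N ∧ b < N)) : vec k N a b = 0 := dif_neg h

lemma vec_apply (a b : ℕ) (a' b' : Fin N) :
    vec k N a b (a', b') = if a = a' ∧ b = b' then 1 else 0 := by
  rw [vec]
  split_ifs with h h' h'
  · simp [h']
  · refine Finsupp.single_eq_of_ne fun heq => h' ?_
    rw [Prod.mk.injEq, Fin.ext_iff, Fin.ext_iff] at heq
    exact ⟨heq.1.symm, heq.2.symm⟩
  · exact absurd ⟨h'.1 ▸ a'.2, h'.2 ▸ b'.2⟩ h
  · rfl

lemma hom_ext {M : Type*} [AddCommGroup M] [Module k M] {φ ψ : BigModule k N →ₗ[k] M}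
    (h : ∀ a b, φ (vec k N a b) = ψ (vec k N a b)) : φ = ψ :=
  Finsupp.lhom_ext' fun p => LinearMap.ext_ring <| by
    simpa only [vec_fin, LinearMap.comp_apply, Finsupp.lsingle_apply] using h p.1 p.2

/-- The endomorphism with prescribed values on the vectors `vec k N a b`. -/
def lift (g : ℕ → ℕ → BigModule k N) : Module.End k (BigModule k N) :=
  Finsupp.linearCombination k fun p : Fin N × Fin N => g p.1 p.2

lemma lift_vec {g : ℕ → ℕ → BigModule k N} (hg : ∀ a b, ¬(a < N ∧ b < N) → g a b = 0) (a b : ℕ) :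
    lift g (vec k N a b) = g a b := by
  by_cases h : a < N ∧ b < N
  · rw [vec, dif_pos h, lift, Finsupp.linearCombination_single, one_smul]
  · rw [vec_eq_zero h, map_zero, hg a b h]

variable (N) in
/-- The diagonal operator acting on the vectors of relative weight `a - b` by `c (a - b)`. -/
def diag (c : ℤ → k) : Module.End k (BigModule k N) := lift fun a b => c (a - b) • vec k N a b

lemma diag_vec (c : ℤ → k) (a b : ℕ) : diag N c (vec k N a b) = c (a - b) • vec k N a b :=
  lift_vec (fun a b h => by rw [vec_eq_zero h, smul_zero]) a b

lemma diag_one : diag N (1 : ℤ → k) = 1 :=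
  hom_ext fun a b => by rw [diag_vec, Pi.one_apply, one_smul, Module.End.one_apply]

lemma diag_mul (c d : ℤ → k) : diag N (c * d) = diag N c * diag N d :=
  hom_ext fun a b => by
    rw [Module.End.mul_apply, diag_vec, diag_vec, map_smul, diag_vec, smul_smul, mul_comm,
      Pi.mul_apply]

lemma diag_pow (c : ℤ → k) (m : ℕ) : diag N (c ^ m) = diag N c ^ m := by
  induction m with
  | zero => rw [pow_zero, pow_zero, diag_one]
  | succ m ih => rw [pow_succ, pow_succ, diag_mul, ih]

variable (k N) in
/-- The action of `F`. -/
def opF : Module.End k (BigModule k N) := lift fun a b => vec k N (a + 1) b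

lemma opF_vec (a b : ℕ) : opF k N (vec k N a b) = vec k N (a + 1) b :=
  lift_vec (fun _ _ h => vec_eq_zero (by omega)) a b

lemma opF_pow_vec (m a b : ℕ) : (opF k N ^ m) (vec k N a b) = vec k N (a + m) b := by
  induction m with
  | zero => rfl
  | succ m ih => rw [pow_succ', Module.End.mul_apply, ih, opF_vec, add_assoc]

lemma opF_pow_eq_zero : opF k N ^ N = 0 :=
  hom_ext fun a b => by rw [opF_pow_vec, vec_eq_zero (by omega), LinearMap.zero_apply]

lemma diag_mul_opF {c : ℤ → k} {s : k} (hc : ∀ t, c (t + 1) = s * c t) :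
    diag N c * opF k N = s • (opF k N * diag N c) := by
  refine hom_ext fun a b => ?_
  rw [LinearMap.smul_apply, Module.End.mul_apply, Module.End.mul_apply, opF_vec, diag_vec,
    diag_vec, map_smul, opF_vec, smul_smul, ← hc, Nat.cast_succ, add_sub_right_comm]

/-- The coefficient of `F^(a-1) x` in `E F^a x - q^a F^a E x`, for `x` of weight `i`. -/
def raisingCoeff (q : k) (i : ℤ) (a : ℕ) : k :=
  -q * gauss k q a * (1 - q ^ (2 * i + a - 1))

lemma raisingCoeff_zero (i : ℤ) : raisingCoeff q i 0 = 0 := by simp [raisingCoeff, gauss]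

lemma raisingCoeff_eq_zero (hN : 1 < N) (hq : IsPrimitiveRoot q N) (i : ℤ) :
    raisingCoeff q i N = 0 := by
  rw [raisingCoeff, gauss, hq.geom_sum_eq_zero hN, mul_zero, zero_mul]

lemma raisingCoeff_succ [NeZero q] (i : ℤ) (a : ℕ) :
    raisingCoeff q i (a + 1) = q * (raisingCoeff q i a - (1 - q ^ (2 * (i + a)))) := by
  have hq : q ≠ 0 := NeZero.ne q
  have hsplit : q ^ (2 * (i + a)) = q ^ (2 * i + a) * q ^ a := by
    rw [← zpow_natCast, ← zpow_add₀ hq]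
    congr 1
    ring
  have hindex : 2 * i + ((a + 1 : ℕ) : ℤ) - 1 = 2 * i + a := by push_cast; ring
  have hgauss : gauss k q a + q ^ a = 1 + q * gauss k q a := by rw [← gauss_succ, gauss_succ']
  rw [raisingCoeff, raisingCoeff, hindex, hsplit, zpow_sub_one₀ hq, gauss_succ]
  generalize q ^ (2 * i + a : ℤ) = x
  field_simp
  linear_combination -hgauss

variable (N) in
/-- The action of `E` on the module whose generator has weight `i`. -/
def opE (q : k) (i : ℤ) : Module.End k (BigModule k N) := lift fun a b =>
  q ^ a • vec k N a (b + 1) + raisingCoeff q (i - b) a • vec k N (a - 1) b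

lemma opE_vec (hN : 1 < N) (hq : IsPrimitiveRoot q N) (i : ℤ) (a b : ℕ) :
    opE N q i (vec k N a b) =
      q ^ a • vec k N a (b + 1) + raisingCoeff q (i - b) a • vec k N (a - 1) b := by
  refine lift_vec (fun a b h => ?_) a b
  rw [vec_eq_zero (a := a) (by omega), smul_zero, zero_add]
  obtain rfl | ha := eq_or_ne a N
  · rw [raisingCoeff_eq_zero hN hq, zero_smul]
  · rw [vec_eq_zero (by omega), smul_zero]

lemma opE_pow_vec_zero (hN : 1 < N) (hq : IsPrimitiveRoot q N) (i : ℤ) (m b : ℕ) :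
    (opE N q i ^ m) (vec k N 0 b) = vec k N 0 (b + m) := by
  induction m with
  | zero => rfl
  | succ m ih =>
    rw [pow_succ', Module.End.mul_apply, ih, opE_vec hN hq, raisingCoeff_zero, zero_smul, add_zero,
      pow_zero, one_smul, add_assoc]

lemma diag_mul_opE (hN : 1 < N) (hq : IsPrimitiveRoot q N) (i : ℤ) {c : ℤ → k} {s : k}
    (hc : ∀ t, c t = s * c (t + 1)) : diag N c * opE N q i = s • (opE N q i * diag N c) := by
  refine hom_ext fun a b => ?_
  rw [LinearMap.smul_apply, Module.End.mul_apply, Module.End.mul_apply, opE_vec hN hq, diag_vec,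
    map_add, map_smul, map_smul, map_smul, opE_vec hN hq, diag_vec, diag_vec, smul_add, smul_add]
  congr 1
  · rw [hc (a - (b + 1 : ℕ)), show (a - (b + 1 : ℕ) + 1 : ℤ) = a - b by push_cast; ring,
      smul_smul, smul_smul, smul_smul]
    congr 1
    ring
  · obtain _ | a := a
    · rw [raisingCoeff_zero, zero_smul, zero_smul, smul_zero, smul_zero]
    · rw [Nat.add_sub_cancel, hc (a - b), show (a - b + 1 : ℤ) = (a + 1 : ℕ) - b by push_cast; ring,
        smul_smul, smul_smul, smul_smul]
      congr 1
      ring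

lemma opF_mul_opE [NeZero q] (hN : 1 < N) (hq : IsPrimitiveRoot q N) (i : ℤ) :
    opF k N * opE N q i =
      q⁻¹ • (opE N q i * opF k N) + (1 - diag N fun t => q ^ (2 * (i + t))) := by
  have hq0 : q ≠ 0 := NeZero.ne q
  refine hom_ext fun a b => ?_
  have hdown : raisingCoeff q (i - b) a • vec k N (a - 1 + 1) b =
      raisingCoeff q (i - b) a • vec k N a b := by
    obtain _ | a := a
    · rw [raisingCoeff_zero, zero_smul, zero_smul]
    · rfl
  rw [LinearMap.add_apply, LinearMap.sub_apply, LinearMap.smul_apply, Module.End.mul_apply,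
    Module.End.mul_apply, opE_vec hN hq, map_add, map_smul, map_smul, opF_vec, opF_vec, opF_vec,
    opE_vec hN hq, hdown, diag_vec, Module.End.one_apply, smul_add, smul_smul, smul_smul, pow_succ',
    inv_mul_cancel_left₀ hq0, raisingCoeff_succ, inv_mul_cancel_left₀ hq0, Nat.add_sub_cancel,
    add_assoc, sub_smul, sub_smul, one_smul, show i + (a - b : ℤ) = i - b + a by ring]
  congr 1
  abel

lemma opE_pow_eq_zero [NeZero q] (hN : 1 < N) (hq : IsPrimitiveRoot q N) (i : ℤ) :
    opE N q i ^ N = 0 := by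
  have hcomm : opF k N * opE N q i ^ N = opE N q i ^ N * opF k N := by
    have hL : diag N (fun t => q ^ (2 * (i + t))) * opE N q i =
        q⁻¹ ^ 2 • (opE N q i * diag N fun t => q ^ (2 * (i + t))) :=
      diag_mul_opE hN hq i fun t => by
        rw [inv_pow, ← zpow_natCast, ← zpow_neg, ← zpow_add₀ (NeZero.ne q)]
        congr 1
        push_cast
        ring
    have := mul_pow_succ_of_skew_comm (A := Module.End k (BigModule k N)) (opF_mul_opE hN hq i) hL
      (N - 1)
    rwa [Nat.sub_add_cancel hN.le, gauss_inv_eq_zero hN hq, zero_smul, add_zero, hq.inv.pow_eq_one,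
      one_smul] at this
  refine hom_ext fun a b => ?_
  rw [← zero_add a, ← opF_pow_vec, ← Module.End.mul_apply,
    ← ((show Commute _ _ from hcomm).pow_left a).eq, Module.End.mul_apply, opE_pow_vec_zero hN hq,
    vec_eq_zero (by omega), map_zero, LinearMap.zero_apply]

lemma opE_apply_last (hN : 1 < N) (hq : IsPrimitiveRoot q N) (i : ℤ) (x : BigModule k N) {b : ℕ}
    (hb : b + 1 < N) :
    opE N q i x (⟨N - 1, by omega⟩, ⟨b + 1, hb⟩) =
      q ^ (N - 1) * x (⟨N - 1, by omega⟩, ⟨b, by omega⟩) := by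
  suffices h : Finsupp.lapply (⟨N - 1, by omega⟩, ⟨b + 1, hb⟩) ∘ₗ opE N q i =
      q ^ (N - 1) • Finsupp.lapply (⟨N - 1, by omega⟩, ⟨b, by omega⟩) from LinearMap.congr_fun h x
  refine hom_ext fun a b' => ?_
  rw [LinearMap.comp_apply, LinearMap.smul_apply, opE_vec hN hq, map_add, map_smul, map_smul]
  simp only [Finsupp.lapply_apply, vec_apply, Nat.add_right_cancel_iff, smul_eq_mul]
  obtain rfl | ha := eq_or_ne a N
  · rw [raisingCoeff_eq_zero hN hq, zero_mul, add_zero, if_neg (by omega), mul_zero,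
      mul_zero]
  · rw [if_neg (c := a - 1 = N - 1 ∧ b' = b + 1) (by omega), mul_zero, add_zero]
    split_ifs with h
    · rw [h.1]
    · rw [mul_zero, mul_zero]

lemma opE_pow_apply_last (hN : 1 < N) (hq : IsPrimitiveRoot q N) (i : ℤ) (x : BigModule k N)
    {m : ℕ} (hm : m < N) :
    (opE N q i ^ m) x (⟨N - 1, by omega⟩, ⟨m, hm⟩) =
      (q ^ (N - 1)) ^ m * x (⟨N - 1, by omega⟩, ⟨0, by omega⟩) := by
  induction m with
  | zero => rw [pow_zero, pow_zero, one_mul, Module.End.one_apply]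
  | succ m ih =>
    rw [pow_succ', Module.End.mul_apply, opE_apply_last hN hq, ih (by omega), pow_succ' (q ^ _),
      mul_assoc]

end BigModule

open BigModule in
lemma exists_algHom_of_diag [NeZero n] [NeZero q] (hq : IsPrimitiveRoot q (n ^ 2)) (hn : 1 < n)
    (i : ℤ) {c l : ℤ → k} (hcn : c ^ n = 1) (hcl : c ^ 2 * l ^ n = 1)
    (hc : ∀ t, c (t + 1) = (q ^ n)⁻¹ * c t) (hl : ∀ t, l t = q ^ (2 * (i + t))) :
    ∃ ρ : U k n q →ₐ[k] Module.End k (BigModule k (n ^ 2)), ρ 𝐊 = diag (n ^ 2) c ∧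
      ρ 𝐊h = diag (n ^ 2) (c * l) ∧ ρ 𝐄 = opE (n ^ 2) q i ∧ ρ 𝐅 = opF k (n ^ 2) := by
  have hq0 : q ≠ 0 := NeZero.ne q
  have hN : 1 < n ^ 2 := Nat.one_lt_pow two_ne_zero hn
  have hcc : c ^ (n - 1) * c = 1 := by rw [pow_sub_one_mul (NeZero.ne n), hcn]
  have hL : diag (n ^ 2) c ^ (n - 1) * diag (n ^ 2) (c * l) =
      diag (n ^ 2) fun t => q ^ (2 * (i + t)) := by
    rw [← diag_pow, ← diag_mul, ← mul_assoc, hcc, one_mul, funext hl]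
  have hyn : (c * l) ^ n = (c ^ (n - 1)) ^ 2 :=
    calc (c * l) ^ n = (c ^ (n - 1) * c) ^ 2 * l ^ n := by
          rw [mul_pow, hcn, hcc, one_pow]
      _ = (c ^ (n - 1)) ^ 2 := by rw [mul_pow, mul_assoc, hcl, mul_one]
  have hcl_succ (t : ℤ) : (c * l) (t + 1) = (q ^ n)⁻¹ * q ^ 2 * (c * l) t := by
    rw [Pi.mul_apply, Pi.mul_apply, hc, hl, hl,
      show 2 * (i + (t + 1)) = (2 : ℕ) + 2 * (i + t) by push_cast; ring, zpow_add₀ hq0,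
      zpow_natCast]
    ring
  refine U_exists_algHom (A := Module.End k (BigModule k (n ^ 2))) ?_ ?_ ?_
    (diag_mul_opE hN hq i fun t => ?_) (diag_mul_opF hc) (diag_mul_opE hN hq i fun t => ?_)
    (diag_mul_opF hcl_succ) (opE_pow_eq_zero hN hq i) opF_pow_eq_zero ?_
  · rw [← diag_pow, hcn, diag_one]
  · rw [← diag_pow, ← diag_pow, ← diag_pow, hyn]
  · rw [← diag_mul, ← diag_mul, mul_comm]
  · rw [hc, mul_inv_cancel_left₀ (pow_ne_zero n hq0)]
  · rw [hcl_succ]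
    field_simp
  · rw [opF_mul_opE hN hq, hL]

open BigModule in
lemma exists_algHom_bigModule [NeZero n] [NeZero q] (hq : IsPrimitiveRoot q (n ^ 2)) (h2 : 2 ∣ n)
    (i : ℤ) {ε : kˣ} (hε : ε ^ 2 = 1) :
    ∃ ρ : U k n q →ₐ[k] Module.End k (BigModule k (n ^ 2)),
      ρ 𝐄 = opE (n ^ 2) q i ∧ ρ 𝐅 = opF k (n ^ 2) ∧
      ρ 𝐊 (vec k (n ^ 2) 0 0) = (ε * q ^ (-(n * i) : ℤ)) • vec k (n ^ 2) 0 0 ∧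
      ρ 𝐊h (vec k (n ^ 2) 0 0) = (ε * q ^ ((2 - n) * i : ℤ)) • vec k (n ^ 2) 0 0 := by
  have hq0 : q ≠ 0 := NeZero.ne q
  let c : ℤ → k := fun t => ε * q ^ (-(n * (i + t)) : ℤ)
  let l : ℤ → k := fun t => q ^ (2 * (i + t))
  have hεk : (ε : k) ^ 2 = 1 := by rw [← Units.val_pow_eq_pow_val, hε, Units.val_one]
  have hcn : c ^ n = 1 := by
    funext t
    obtain ⟨p, hp⟩ := h2
    have hexp : (-(n * (i + t)) * n : ℤ) = (n ^ 2 : ℕ) * -(i + t) := by push_cast; ring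
    rw [Pi.pow_apply, Pi.one_apply, mul_pow, ← zpow_natCast (q ^ _), ← zpow_mul, hexp, zpow_mul,
      zpow_natCast, hq.pow_eq_one, one_zpow, hp, pow_mul, hεk, one_pow, one_mul]
  have hcl : c ^ 2 * l ^ n = 1 := by
    funext t
    rw [Pi.mul_apply, Pi.pow_apply, Pi.pow_apply, Pi.one_apply, mul_pow, hεk, one_mul,
      ← zpow_natCast, ← zpow_natCast, ← zpow_mul, ← zpow_mul, ← zpow_add₀ hq0]
    convert zpow_zero q using 2
    push_cast
    ring
  have hc (t : ℤ) : c (t + 1) = (q ^ n)⁻¹ * c t := by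
    simp only [c]
    rw [show (-(n * (i + (t + 1))) : ℤ) = -(n : ℕ) + -(n * (i + t)) by ring, zpow_add₀ hq0,
      zpow_neg q (n : ℕ), zpow_natCast, mul_left_comm]
  obtain ⟨ρ, hK, hKh, hE, hF⟩ :=
    exists_algHom_of_diag hq (Nat.le_of_dvd (NeZero.pos n) h2) i hcn hcl hc fun _ => rfl
  refine ⟨ρ, hE, hF, ?_, ?_⟩
  · rw [hK, diag_vec]
    simp [c]
  · rw [hKh, diag_vec, Pi.mul_apply, mul_assoc, ← zpow_add₀ hq0]
    congr 3
    push_cast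
    ring

open BigModule in
lemma exists_algHom_bigModule_eIdem [NeZero n] [NeZero q] (hq : IsPrimitiveRoot q (n ^ 2))
    (h4 : 4 ∣ n) (i : ℕ) {j : ℕ} (hj : j ≤ 1) :
    ∃ ρ : U k n q →ₐ[k] Module.End k (BigModule k (n ^ 2)),
      ρ 𝐄 = opE (n ^ 2) q i ∧ ρ 𝐅 = opF k (n ^ 2) ∧
      ρ (eIdem k n q i j) (vec k (n ^ 2) 0 0) = vec k (n ^ 2) 0 0 := by
  obtain ⟨ρ, hE, hF, hK, hKh⟩ := exists_algHom_bigModule hq ((by norm_num : 2 ∣ 4).trans h4) i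
    (ε := (-1) ^ (i + j)) (by rw [← pow_mul, mul_comm, pow_mul, neg_one_sq, one_pow])
  let _ : Module (U k n q) (BigModule k (n ^ 2)) := Module.compHom _ ρ.toRingHom
  have hρ (a : U k n q) (v : BigModule k (n ^ 2)) : a • v = ρ a v := rfl
  have : IsScalarTower k (U k n q) (BigModule k (n ^ 2)) :=
    ⟨fun c a v => by rw [hρ, hρ, map_smul, LinearMap.smul_apply]⟩
  have hv : IsWeightVector n q i ((-1) ^ (i + j)) (vec k (n ^ 2) 0 0) := ⟨hK, hKh⟩
  exact ⟨ρ, hE, hF, hv.eIdem_smul hq h4 hj⟩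

lemma linearIndependent_F_pow_mul_E_pow_mul_eIdem [NeZero n] [NeZero q]
    (hq : IsPrimitiveRoot q (n ^ 2)) (h4 : 4 ∣ n) (i : ℕ) {j : ℕ} (hj : j ≤ 1) :
    LinearIndependent k fun p : Fin (n ^ 2) × Fin (n ^ 2) =>
      𝐅 ^ (p.1 : ℕ) * 𝐄 ^ (p.2 : ℕ) * eIdem k n q i j := by
  have hN : 1 < n ^ 2 := Nat.one_lt_pow two_ne_zero
    ((by norm_num : 1 < 4).trans_le (Nat.le_of_dvd (NeZero.pos n) h4))
  obtain ⟨ρ, hE, hF, he⟩ := exists_algHom_bigModule_eIdem hq h4 i hj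
  refine .of_comp ((LinearMap.applyₗ (BigModule.vec k (n ^ 2) 0 0)) ∘ₗ ρ.toLinearMap) ?_
  convert Finsupp.linearIndependent_single_one k (Fin (n ^ 2) × Fin (n ^ 2)) with p
  rw [Function.comp_apply, LinearMap.comp_apply, AlgHom.toLinearMap_apply,
    LinearMap.applyₗ_apply_apply, map_mul, map_mul, map_pow, map_pow, hE, hF, Module.End.mul_apply,
    he, Module.End.mul_apply, BigModule.opE_pow_vec_zero hN hq, BigModule.opF_pow_vec, zero_add,
    zero_add, BigModule.vec_fin]

lemma E_pow_mul_alpha_ne_zero [NeZero n] [NeZero q] (hq : IsPrimitiveRoot q (n ^ 2)) (h4 : 4 ∣ n)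
    (i : ℕ) {j : ℕ} (hj : j ≤ 1) : 𝐄 ^ (n ^ 2 - 1) * alpha k n q i j ≠ 0 := by
  have hN : 1 < n ^ 2 := Nat.one_lt_pow two_ne_zero
    ((by norm_num : 1 < 4).trans_le (Nat.le_of_dvd (NeZero.pos n) h4))
  obtain ⟨ρ, hE, hF, he⟩ := exists_algHom_bigModule_eIdem hq h4 i hj
  intro h
  have hzero : (BigModule.opE (n ^ 2) q i ^ (n ^ 2 - 1))
      (BigModule.vec k (n ^ 2) (n ^ 2 - 1) 0) = 0 := by
    simpa only [alpha, map_mul, map_pow, hE, hF, Module.End.mul_apply, he, BigModule.opF_pow_vec,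
      zero_add, map_zero, LinearMap.zero_apply] using congrArg (ρ · (BigModule.vec k (n ^ 2) 0 0)) h
  have hlast := BigModule.opE_pow_apply_last hN hq i (BigModule.vec k (n ^ 2) (n ^ 2 - 1) 0)
    (m := n ^ 2 - 1) (by omega)
  rw [hzero, BigModule.vec_apply, if_pos ⟨rfl, rfl⟩, mul_one] at hlast
  exact pow_ne_zero _ (pow_ne_zero _ (NeZero.ne q)) hlast.symm

/-! ### The generators `γ` -/

lemma mul_pow_of_skew_comm {A : Type*} [Ring A] [Algebra k A] {x y : A} {s : k}
    (h : x * y = s • (y * x)) (m : ℕ) : x * y ^ m = s ^ m • (y ^ m * x) := by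
  have hxy : SemiconjBy x y (s • y) := by rw [SemiconjBy, h, smul_mul_assoc]
  rw [(hxy.pow_right m).eq, smul_pow, smul_mul_assoc]

lemma mul_eq_inv_smul_mul {A : Type*} [Ring A] [Algebra k A] {x y : A} {s : k} (hs : s ≠ 0)
    (h : x * y = s • (y * x)) : y * x = s⁻¹ • (x * y) := by
  rw [h, inv_smul_smul₀ hs]

variable (k n q) in
/-- The PBW-type monomial `F^a K^c K̂^d E^b`. -/
def pbwMonomial (a c d b : ℕ) : U k n q := 𝐅 ^ a * 𝐊 ^ c * 𝐊h ^ d * 𝐄 ^ b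

local notation "𝐌" => pbwMonomial k n q

lemma F_mul_pbwMonomial (a c d b : ℕ) : 𝐅 * 𝐌 a c d b = 𝐌 (a + 1) c d b := by
  simp only [pbwMonomial, pow_succ', mul_assoc]

lemma F_pow_mul_pbwMonomial (a c d b : ℕ) : 𝐅 ^ a * 𝐌 0 c d b = 𝐌 a c d b := by
  simp only [pbwMonomial, pow_zero, one_mul, mul_assoc]

lemma Kh_mul_pbwMonomial_zero (c d b : ℕ) : 𝐊h * 𝐌 0 c d b = 𝐌 0 c (d + 1) b := by
  simp only [pbwMonomial, pow_zero, one_mul, ← mul_assoc,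
    ((show Commute 𝐊 𝐊h from K_mul_Kh).pow_left c).eq.symm, pow_succ']

lemma K_pow_mul_pbwMonomial_zero (m c d b : ℕ) : 𝐊 ^ m * 𝐌 0 c d b = 𝐌 0 (m + c) d b := by
  simp only [pbwMonomial, pow_zero, one_mul, pow_add, mul_assoc]

variable (k n q) in
/-- The span of the monomials `F^a K^c K̂^d E^b` with `a ∈ s`. -/
def pbwSpan (s : Set ℕ) : Submodule k (U k n q) :=
  Submodule.span k {x | ∃ a ∈ s, ∃ c d b, 𝐌 a c d b = x}

lemma pbwMonomial_mem_pbwSpan {s : Set ℕ} {a : ℕ} (ha : a ∈ s) (c d b : ℕ) :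
    𝐌 a c d b ∈ pbwSpan k n q s :=
  Submodule.subset_span ⟨a, ha, c, d, b, rfl⟩

lemma mul_mem_pbwSpan {s t : Set ℕ} {u x : U k n q}
    (h : ∀ a ∈ s, ∀ c d b, u * 𝐌 a c d b ∈ pbwSpan k n q t) (hx : x ∈ pbwSpan k n q s) :
    u * x ∈ pbwSpan k n q t := by
  refine Submodule.span_le (p := (pbwSpan k n q t).comap (LinearMap.mulLeft k u)).2 ?_ hx
  rintro _ ⟨a, ha, c, d, b, rfl⟩
  exact h a ha c d b

lemma F_mul_mem_pbwSpan_univ {x : U k n q} (hx : x ∈ pbwSpan k n q Set.univ) :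
    𝐅 * x ∈ pbwSpan k n q Set.univ :=
  mul_mem_pbwSpan (fun a _ c d b => by
    rw [F_mul_pbwMonomial]
    exact pbwMonomial_mem_pbwSpan (Set.mem_univ _) c d b) hx

section Nonzero

variable [NeZero n]

lemma K_mul_pbwMonomial (a c d b : ℕ) :
    𝐊 * 𝐌 a c d b = ((q ^ n)⁻¹) ^ a • 𝐌 a (1 + c) d b := by
  rw [← F_pow_mul_pbwMonomial a c, ← mul_assoc, mul_pow_of_skew_comm K_mul_F, smul_mul_assoc,
    mul_assoc, ← F_pow_mul_pbwMonomial a (1 + c), ← K_pow_mul_pbwMonomial_zero, pow_one]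

lemma Kh_mul_pbwMonomial (a c d b : ℕ) :
    𝐊h * 𝐌 a c d b = ((q ^ n)⁻¹ * q ^ 2) ^ a • 𝐌 a c (d + 1) b := by
  rw [← F_pow_mul_pbwMonomial, ← mul_assoc, mul_pow_of_skew_comm Kh_mul_F, smul_mul_assoc,
    mul_assoc, Kh_mul_pbwMonomial_zero, F_pow_mul_pbwMonomial]

lemma K_mul_mem_pbwSpan {s : Set ℕ} {x : U k n q} (hx : x ∈ pbwSpan k n q s) :
    𝐊 * x ∈ pbwSpan k n q s :=
  mul_mem_pbwSpan (fun a ha c d b => by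
    rw [K_mul_pbwMonomial]
    exact Submodule.smul_mem _ _ (pbwMonomial_mem_pbwSpan ha _ d b)) hx

lemma Kh_mul_mem_pbwSpan {s : Set ℕ} {x : U k n q} (hx : x ∈ pbwSpan k n q s) :
    𝐊h * x ∈ pbwSpan k n q s :=
  mul_mem_pbwSpan (fun a ha c d b => by
    rw [Kh_mul_pbwMonomial]
    exact Submodule.smul_mem _ _ (pbwMonomial_mem_pbwSpan ha c _ b)) hx

lemma L_mul_mem_pbwSpan {s : Set ℕ} {x : U k n q} (hx : x ∈ pbwSpan k n q s) :
    (𝐋) * x ∈ pbwSpan k n q s := by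
  have hpow (m : ℕ) : 𝐊 ^ m * (𝐊h * x) ∈ pbwSpan k n q s := by
    induction m with
    | zero => rw [pow_zero, one_mul]; exact Kh_mul_mem_pbwSpan hx
    | succ m ih => rw [pow_succ', mul_assoc]; exact K_mul_mem_pbwSpan ih
  rw [mul_assoc]
  exact hpow (n - 1)

lemma E_mul_pbwMonomial_zero [NeZero q] (c d b : ℕ) :
    ∃ s : k, 𝐄 * 𝐌 0 c d b = s • 𝐌 0 c d (b + 1) := by
  have hq0 : q ≠ 0 := NeZero.ne q
  have hEK := mul_pow_of_skew_comm
    (mul_eq_inv_smul_mul (pow_ne_zero n hq0) (K_mul_E (k := k) (n := n))) c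
  have hEKh := mul_pow_of_skew_comm (mul_eq_inv_smul_mul
    (mul_ne_zero (pow_ne_zero n hq0) (inv_ne_zero (pow_ne_zero 2 hq0))) (Kh_mul_E (k := k))) d
  refine ⟨(q ^ n)⁻¹ ^ c * (q ^ n * (q ^ 2)⁻¹)⁻¹ ^ d, ?_⟩
  rw [pbwMonomial, pow_zero, one_mul, ← mul_assoc, ← mul_assoc, hEK, smul_mul_assoc, mul_assoc,
    hEKh, mul_smul_comm, smul_smul, smul_mul_assoc, mul_assoc, mul_assoc, ← pow_succ', pbwMonomial,
    pow_zero, one_mul, mul_assoc]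

lemma L_mul_F : (𝐋) * 𝐅 = q ^ 2 • (𝐅 * (𝐋)) := by
  refine (isUnit_iff_exists.2 ⟨_, K_mul_Kinv, Kinv_mul_K⟩).mul_left_cancel ?_
  rw [mul_smul_comm, ← mul_assoc, ← mul_assoc 𝐊 𝐅, K_mul_L, K_mul_F, Kh_mul_F, smul_mul_assoc,
    mul_assoc 𝐅, K_mul_L, smul_smul, mul_comm]

end Nonzero

lemma E_mul_F [NeZero q] : 𝐄 * 𝐅 = q • (𝐅 * 𝐄) - q • (1 - 𝐋) := by
  rw [F_mul_E, smul_add, smul_inv_smul₀ (NeZero.ne q), add_sub_cancel_right]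

lemma E_mul_F_mul [NeZero q] (x : U k n q) :
    𝐄 * (𝐅 * x) = q • (𝐅 * (𝐄 * x)) - q • (x - (𝐋) * x) := by
  rw [← mul_assoc, E_mul_F, sub_mul, smul_mul_assoc, smul_mul_assoc, sub_mul, one_mul,
    mul_assoc 𝐅]

section Nonzero

variable [NeZero n] [NeZero q]

lemma E_mul_pbwMonomial_mem_pbwSpan_univ (a c d b : ℕ) :
    𝐄 * 𝐌 a c d b ∈ pbwSpan k n q Set.univ := by
  have hmem := pbwMonomial_mem_pbwSpan (k := k) (n := n) (q := q) (Set.mem_univ a) c d b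
  induction a with
  | zero =>
    obtain ⟨s, hs⟩ := E_mul_pbwMonomial_zero (k := k) (n := n) (q := q) c d b
    rw [hs]
    exact Submodule.smul_mem _ s (pbwMonomial_mem_pbwSpan (Set.mem_univ 0) c d _)
  | succ a ih =>
    have hmem := pbwMonomial_mem_pbwSpan (k := k) (n := n) (q := q) (Set.mem_univ a) c d b
    rw [← F_mul_pbwMonomial, E_mul_F_mul]
    exact Submodule.sub_mem _ (Submodule.smul_mem _ _ (F_mul_mem_pbwSpan_univ (ih hmem)))
      (Submodule.smul_mem _ _ (Submodule.sub_mem _ hmem (L_mul_mem_pbwSpan hmem)))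

lemma pbwSpan_univ : pbwSpan k n q Set.univ = ⊤ := by
  refine Submodule.eq_top_iff'.2 fun u => ?_
  have h1 : (1 : U k n q) ∈ pbwSpan k n q Set.univ := by
    simpa [pbwMonomial] using
      pbwMonomial_mem_pbwSpan (k := k) (n := n) (q := q) (Set.mem_univ 0) 0 0 0
  rw [← mul_one u, ← smul_eq_mul]
  refine smul_mem_span_of_generators ?_ ?_ ?_ ?_ u h1 <;> rintro _ ⟨a, ha, c, d, b, rfl⟩
  · exact K_mul_mem_pbwSpan (pbwMonomial_mem_pbwSpan ha c d b)
  · exact Kh_mul_mem_pbwSpan (pbwMonomial_mem_pbwSpan ha c d b)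
  · exact E_mul_pbwMonomial_mem_pbwSpan_univ a c d b
  · exact F_mul_mem_pbwSpan_univ (pbwMonomial_mem_pbwSpan ha c d b)

end Nonzero

lemma pbw_eq_pbwSpan [NeZero n] : pbw k n q = pbwSpan k n q (Set.Iic (n ^ 2 - 2)) := by
  have hn : 0 < n := NeZero.pos n
  have hN : 0 < n ^ 2 := Nat.pow_pos hn
  refine le_antisymm (Submodule.span_mono ?_) (Submodule.span_le.2 ?_)
  · rintro _ ⟨a, b, c, d, ha, -, -, -, rfl⟩
    exact ⟨a, ha, c, d, b, rfl⟩
  · rintro _ ⟨a, ha, c, d, b, rfl⟩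
    rw [SetLike.mem_coe, pbwMonomial, pow_eq_pow_mod c K_pow, pow_eq_pow_mod d Kh_pow_sq]
    by_cases hb : b < n ^ 2
    · exact Submodule.subset_span ⟨a, b, c % n, d % n ^ 2, ha, Nat.le_sub_one_of_lt hb,
        Nat.le_sub_one_of_lt (Nat.mod_lt c hn), Nat.le_sub_one_of_lt (Nat.mod_lt d hN), rfl⟩
    · rw [pow_eq_zero_of_le (not_lt.1 hb) E_pow_sq, mul_zero]
      exact Submodule.zero_mem _

lemma exists_mem_pbw_F_mul_eq [NeZero n] [NeZero q] (x : U k n q) :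
    ∃ y ∈ pbw k n q, 𝐅 * y = 𝐅 * x := by
  have hx : x ∈ pbwSpan k n q Set.univ := by rw [pbwSpan_univ]; exact Submodule.mem_top
  suffices h : pbwSpan k n q Set.univ ≤
      ((pbw k n q).map (LinearMap.mulLeft k 𝐅)).comap (LinearMap.mulLeft k 𝐅) from h hx
  refine Submodule.span_le.2 ?_
  rintro _ ⟨a, -, c, d, b, rfl⟩
  by_cases ha : a ≤ n ^ 2 - 2
  · exact ⟨_, pbw_eq_pbwSpan (k := k) (n := n) (q := q) ▸
      pbwMonomial_mem_pbwSpan (Set.mem_Iic.2 ha) c d b, rfl⟩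
  · refine ⟨0, Submodule.zero_mem (pbw k n q), ?_⟩
    rw [map_zero, LinearMap.mulLeft_apply, F_mul_pbwMonomial, ← F_pow_mul_pbwMonomial,
      pow_eq_zero_of_le (show n ^ 2 ≤ a + 1 by omega) F_pow_sq, zero_mul]

lemma F_pow_dvd_E_mul [NeZero n] [NeZero q] {m : ℕ} {x : U k n q} (h : 𝐅 ^ (m + 1) ∣ x) :
    𝐅 ^ m ∣ 𝐄 * x := by
  obtain ⟨y, rfl⟩ := h
  induction m with
  | zero => rw [pow_zero]; exact one_dvd (𝐄 * _)
  | succ m ih =>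
    obtain ⟨z, hz⟩ := ih
    have hL := mul_pow_of_skew_comm (L_mul_F (k := k) (n := n) (q := q)) (m + 1)
    refine ⟨q • z - q • (y - (q ^ 2) ^ (m + 1) • ((𝐋) * y)), ?_⟩
    rw [pow_succ' 𝐅 (m + 1), mul_assoc, E_mul_F_mul, hz, ← mul_assoc (𝐋), hL, mul_sub,
      mul_smul_comm, mul_smul_comm, mul_sub, mul_smul_comm, ← mul_assoc 𝐅, ← pow_succ',
      smul_mul_assoc, mul_assoc]

lemma F_pow_dvd_E_pow_mul [NeZero n] [NeZero q] {m r : ℕ} {x : U k n q} (h : 𝐅 ^ (m + r) ∣ x) :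
    𝐅 ^ m ∣ 𝐄 ^ r * x := by
  induction r generalizing m with
  | zero => rwa [pow_zero, one_mul]
  | succ r ih =>
    rw [pow_succ', mul_assoc]
    exact F_pow_dvd_E_mul (ih (by rwa [add_right_comm]))

lemma F_dvd_beta [NeZero n] [NeZero q] {i : ℕ} (hi : 1 ≤ i) (hi' : 2 * i ≤ n ^ 2) (j : ℕ) :
    𝐅 ∣ beta k n q i j := by
  rw [beta, ← pow_one 𝐅]
  exact F_pow_dvd_E_pow_mul ((pow_dvd_pow 𝐅 (by omega)).trans (Dvd.intro _ rfl))

lemma pbwMonomial_mul_of_isWeightVector [NeZero n] [NeZero q] {i : ℤ} {ε : kˣ} {e : U k n q}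
    (he : IsWeightVector n q i ε e) (a c d b : ℕ) :
    ∃ s : k, 𝐌 a c d b * e = s • (𝐅 ^ a * 𝐄 ^ b * e) := by
  have hEe := he.E_pow_smul b
  refine ⟨(ε * q ^ ((2 - n) * (i - b))) ^ d * (ε * q ^ (-(n * (i - b)))) ^ c, ?_⟩
  simp only [pbwMonomial, mul_assoc]
  simp only [← smul_eq_mul (α := U k n q)] at hEe ⊢
  rw [pow_smul_of_smul_eq hEe.Kh_smul, smul_algebra_smul_comm, pow_smul_of_smul_eq hEe.K_smul,
    smul_smul, smul_algebra_smul_comm]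

lemma eq_zero_of_mem_pbw_of_F_mul_eq_zero [NeZero n] [NeZero q] (hq : IsPrimitiveRoot q (n ^ 2))
    (h4 : 4 ∣ n) {x : U k n q} (hx : x ∈ pbw k n q) (hFx : 𝐅 * x = 0) : x = 0 := by
  have h2 : 2 ∣ n := dvd_trans (by norm_num) h4
  have hN : 1 < n ^ 2 := Nat.one_lt_pow two_ne_zero (Nat.le_of_dvd (NeZero.pos n) h2)
  suffices h : ∀ i j, j ≤ 1 → x * eIdem k n q i j = 0 by
    rw [← mul_one x, ← sum_eIdem hq h2, Finset.mul_sum]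
    refine Finset.sum_eq_zero fun i _ => ?_
    rw [Finset.mul_sum]
    exact Finset.sum_eq_zero fun j hj => h i j (Nat.le_of_lt_succ (Finset.mem_range.1 hj))
  intro i j hj
  let v (p : Fin (n ^ 2 - 1) × Fin (n ^ 2)) : U k n q :=
    𝐅 ^ (p.1 : ℕ) * 𝐄 ^ (p.2 : ℕ) * eIdem k n q i j
  have hxe : x * eIdem k n q i j ∈ Submodule.span k (Set.range v) := by
    suffices h : pbw k n q ≤
        (Submodule.span k (Set.range v)).comap (LinearMap.mulRight k (eIdem k n q i j)) from h hx
    refine Submodule.span_le.2 ?_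
    rintro _ ⟨a, b, c, d, ha, hb, -, -, rfl⟩
    rw [← pbwMonomial, SetLike.mem_coe, Submodule.mem_comap, LinearMap.mulRight_apply]
    obtain ⟨s, hs⟩ := pbwMonomial_mul_of_isWeightVector (isWeightVector_eIdem hq h4 i hj) a c d b
    have hv : s • v (⟨a, by omega⟩, ⟨b, by omega⟩) ∈ Submodule.span k (Set.range v) :=
      Submodule.smul_mem _ s (Submodule.subset_span ⟨_, rfl⟩)
    exact hs.symm ▸ hv
  have hli : LinearIndependent k (LinearMap.mulLeft k 𝐅 ∘ v) := by
    let shift (p : Fin (n ^ 2 - 1) × Fin (n ^ 2)) : Fin (n ^ 2) × Fin (n ^ 2) :=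
      (⟨p.1 + 1, by omega⟩, p.2)
    convert (linearIndependent_F_pow_mul_E_pow_mul_eIdem hq h4 i hj).comp shift ?_ using 1
    · funext p
      simp only [Function.comp_apply, LinearMap.mulLeft_apply, v, shift, pow_succ', mul_assoc]
    · rintro ⟨a, b⟩ ⟨a', b'⟩ h
      simpa [shift, Fin.ext_iff] using h
  exact (Submodule.disjoint_def.1 (Submodule.range_ker_disjoint hli)) _ hxe
    (by rw [LinearMap.mem_ker, LinearMap.mulLeft_apply, ← mul_assoc, hFx, zero_mul])

lemma gam_spec [NeZero n] [NeZero q] (hq : IsPrimitiveRoot q (n ^ 2)) (h4 : 4 ∣ n) {i : ℕ}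
    (hi : 1 ≤ i) (hi' : 2 * i ≤ n ^ 2) (j : ℕ) :
    gam k n q i j ∈ pbw k n q ∧ 𝐅 * gam k n q i j = beta k n q i j := by
  have hex : ∃! x, x ∈ pbw k n q ∧ 𝐅 * x = beta k n q i j := by
    obtain ⟨x, hx⟩ := F_dvd_beta (k := k) (q := q) hi hi' j
    obtain ⟨y, hy, hFy⟩ := exists_mem_pbw_F_mul_eq x
    refine ⟨y, ⟨hy, hFy.trans hx.symm⟩, fun z ⟨hz, hFz⟩ => ?_⟩
    exact sub_eq_zero.1 (eq_zero_of_mem_pbw_of_F_mul_eq_zero hq h4 (Submodule.sub_mem _ hz hy)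
      (by rw [mul_sub, hFz, hFy, hx, sub_self]))
  rw [gam, dif_pos hex]
  exact hex.choose_spec.1

lemma isPrimitiveVector_alpha [NeZero n] [NeZero q] (hq : IsPrimitiveRoot q (n ^ 2)) (h4 : 4 ∣ n)
    (i : ℕ) {j : ℕ} (hj : j ≤ 1) :
    IsPrimitiveVector n q ((i : ℤ) - 1) ((-1) ^ (i + j)) (alpha k n q i j) := by
  have hN : 1 ≤ n ^ 2 := Nat.pow_pos (NeZero.pos n)
  have heven : Even n := (even_iff_two_dvd.2 (dvd_trans (by norm_num) h4))
  refine ⟨((isWeightVector_eIdem hq h4 i hj).F_pow_smul (n ^ 2 - 1)).of_modEq heven hq.pow_eq_one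
    (Int.modEq_iff_dvd.2 ⟨-2, ?_⟩), ?_⟩
  · push_cast [Nat.cast_sub hN]
    ring
  · rw [smul_eq_mul, alpha, ← mul_assoc, mul_pow_sub_one (by omega), F_pow_sq, zero_mul]

lemma mul_eq_smul_of_mul_F_mul_eq [NeZero n] [NeZero q] (hq : IsPrimitiveRoot q (n ^ 2))
    (h4 : 4 ∣ n) {u x : U k n q} {s c : k} (hs : s ≠ 0) (hu : u * 𝐅 = s • (𝐅 * u))
    (hx : x ∈ pbw k n q) (hux : u * x ∈ pbw k n q) (h : u * (𝐅 * x) = (s * c) • (𝐅 * x)) :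
    u * x = c • x := by
  refine sub_eq_zero.1 (eq_zero_of_mem_pbw_of_F_mul_eq_zero hq h4
    (Submodule.sub_mem _ hux (Submodule.smul_mem _ c hx)) ?_)
  rw [← mul_assoc, hu, smul_mul_assoc, mul_assoc, mul_smul] at h
  rw [mul_sub, mul_smul_comm, smul_right_injective _ hs h, sub_self]

lemma isWeightVector_of_F_smul [NeZero n] [NeZero q] (hq : IsPrimitiveRoot q (n ^ 2)) (h4 : 4 ∣ n)
    {i : ℤ} {ε : kˣ} {x : U k n q} (hx : x ∈ pbw k n q)
    (hFx : IsWeightVector n q (i + 1) ε (𝐅 • x)) : IsWeightVector n q i ε x := by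
  have hq0 : q ≠ 0 := NeZero.ne q
  have hqn : q ^ n ≠ 0 := pow_ne_zero n hq0
  have hx' := pbw_eq_pbwSpan (k := k) (n := n) (q := q) ▸ hx
  constructor
  · refine mul_eq_smul_of_mul_F_mul_eq hq h4 (inv_ne_zero hqn) K_mul_F hx
      (by rw [pbw_eq_pbwSpan]; exact K_mul_mem_pbwSpan hx') (hFx.K_smul.trans ?_)
    rw [mul_left_comm, ← zpow_natCast q n, ← zpow_neg, ← zpow_add₀ hq0, smul_eq_mul]
    congr 3
    ring
  · refine mul_eq_smul_of_mul_F_mul_eq hq h4 (mul_ne_zero (inv_ne_zero hqn) (pow_ne_zero 2 hq0))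
      Kh_mul_F hx (by rw [pbw_eq_pbwSpan]; exact Kh_mul_mem_pbwSpan hx') (hFx.Kh_smul.trans ?_)
    rw [mul_left_comm, ← zpow_natCast q n, ← zpow_natCast q 2, ← zpow_neg, ← zpow_add₀ hq0,
      ← zpow_add₀ hq0, smul_eq_mul]
    congr 3
    push_cast
    ring

theorem isProjectiveGenerator_gam [NeZero n] [NeZero q] (hq : IsPrimitiveRoot q (n ^ 2))
    (h4 : 4 ∣ n) {i j : ℕ} (hi : 1 ≤ i) (hi' : 2 * i ≤ n ^ 2) (hj : j ≤ 1) :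
    IsProjectiveGenerator n q i ((-1) ^ (i + j)) (gam k n q i j) (alpha k n q i j) := by
  obtain ⟨hmem, hF⟩ := gam_spec hq h4 hi hi' j
  have halpha := isPrimitiveVector_alpha hq h4 i hj
  refine ⟨hi, hi', isWeightVector_of_F_smul hq h4 hmem ?_, halpha, hF,
    E_pow_mul_alpha_ne_zero hq h4 i hj⟩
  convert halpha.toIsWeightVector.E_pow_smul (2 * i - 2) using 1
  · omega
  · exact hF

/-! ### The modules `S_{2i,j}` and `P_{2i,j}` -/

lemma span_singleton_mk_eq_top {R M : Type*} [Ring R] [AddCommGroup M] [Module R M] (x : M) :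
    Submodule.span R {(⟨x, Submodule.mem_span_singleton_self x⟩ : Submodule.span R {x})} = ⊤ := by
  rw [Submodule.span_singleton_eq_top_iff]
  rintro ⟨z, hz⟩
  obtain ⟨r, rfl⟩ := Submodule.mem_span_singleton.1 hz
  exact ⟨r, rfl⟩

section Submodules

variable {N : Submodule (U k n q) (U k n q)} {ε : kˣ}

lemma IsPrimitiveVector.of_coe {i : ℤ} {x : N} (hx : IsPrimitiveVector n q i ε (x : U k n q)) :
    IsPrimitiveVector n q i ε x :=
  ⟨.of_map (f := N.subtype) N.injective_subtype hx.toIsWeightVector, Subtype.ext hx.F_smul⟩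

lemma IsSimpleGenerator.of_coe {i : ℕ} {x : N} (hx : IsSimpleGenerator n q i ε (x : U k n q)) :
    IsSimpleGenerator n q i ε x :=
  ⟨.of_coe hx.toIsPrimitiveVector, hx.one_le, hx.two_mul_le, Subtype.ext hx.E_pow_smul_eq_zero,
    fun h => hx.E_pow_smul_ne_zero (congrArg Subtype.val h)⟩

lemma IsProjectiveGenerator.of_coe {i : ℕ} {g a : N}
    (hg : IsProjectiveGenerator n q i ε (g : U k n q) (a : U k n q)) :
    IsProjectiveGenerator n q i ε g a :=
  ⟨hg.one_le, hg.two_mul_le, .of_map (f := N.subtype) N.injective_subtype hg.gen, .of_coe hg.prim,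
    Subtype.ext hg.F_smul_gen, fun h => hg.E_pow_smul_ne_zero (congrArg Subtype.val h)⟩

variable [NeZero n] [NeZero q] {j : ℕ}

lemma exists_isSimpleGenerator_S (hq : IsPrimitiveRoot q (n ^ 2)) (h4 : 4 ∣ n) {i : ℕ}
    (hi : 1 ≤ i) (hi' : 2 * i ≤ n ^ 2) (hj : j ≤ 1) :
    ∃ x : S k n q i j, IsSimpleGenerator n q i ((-1) ^ (i + j)) x ∧
      Submodule.span (U k n q) {x} = ⊤ := by
  have hg := isProjectiveGenerator_gam hq h4 hi hi' hj
  have hS : S k n q i j = Submodule.span (U k n q) {𝐄 ^ (2 * i - 1) • alpha k n q i j} :=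
    hg.sSup_isSimpleModule_eq_span hq
  exact hS ▸ ⟨⟨_, Submodule.mem_span_singleton_self _⟩, .of_coe (hg.isSimpleGenerator hq),
    span_singleton_mk_eq_top _⟩

lemma exists_isProjectiveGenerator_P (hq : IsPrimitiveRoot q (n ^ 2)) (h4 : 4 ∣ n) (hj : j ≤ 1) :
    ∃ g a : P k n q 1 j, IsProjectiveGenerator n q 1 ((-1) ^ (1 + j)) g a ∧
      Submodule.span (U k n q) {g} = ⊤ := by
  have hn : 2 * 1 ≤ n ^ 2 := by nlinarith [Nat.le_of_dvd (NeZero.pos n) h4]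
  have hg := isProjectiveGenerator_gam hq h4 le_rfl hn hj
  have hgen : gam k n q 1 j ∈ P k n q 1 j := Submodule.mem_span_singleton_self _
  have halpha : 𝐅 • gam k n q 1 j = alpha k n q 1 j := by
    simpa only [mul_one, Nat.sub_self, pow_zero, one_smul] using hg.F_smul_gen
  exact ⟨⟨_, hgen⟩, ⟨_, halpha.subst (Submodule.smul_mem _ _ hgen)⟩, .of_coe hg,
    span_singleton_mk_eq_top _⟩

end Submodules

/-! ### The idempotents `1_r` and the element `♭` -/

section Flat

lemma isPrimitiveRoot_pow_self [NeZero n] (hq : IsPrimitiveRoot q (n ^ 2)) :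
    IsPrimitiveRoot (q ^ n) n :=
  hq.pow (pow_pos (NeZero.pos n) 2) (sq n)

variable {M : Type*} [AddCommGroup M] [Module k M] [Module (U k n q) M]
  [IsScalarTower k (U k n q) M] [NeZero n] {y : M}

lemma exists_pow_eq_of_K_smul (hq : IsPrimitiveRoot q (n ^ 2)) {l : k} (hy0 : y ≠ 0)
    (hy : 𝐊 • y = l • y) : ∃ r < n, (q ^ n) ^ r = l := by
  have hl : l ^ n = 1 := by
    have hpow := pow_smul_of_smul_eq hy n
    rw [K_pow, one_smul, ← sub_eq_zero] at hpow
    nth_rw 1 [← one_smul k y] at hpow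
    rw [← sub_smul] at hpow
    exact (sub_eq_zero.1 ((smul_eq_zero.1 hpow).resolve_right hy0)).symm
  exact (isPrimitiveRoot_pow_self hq).eq_pow_of_pow_eq_one hl

lemma oneIdem_smul (hq : IsPrimitiveRoot q (n ^ 2)) {r s : ℕ} (hr : r < n) (hs : s < n)
    (hy : 𝐊 • y = (q ^ n) ^ r • y) : oneIdem k n q s • y = if s = r then y else 0 := by
  have hroot := isPrimitiveRoot_pow_self hq
  have hterm (t : ℕ) : ((q ^ n) ^ ((n - s) * t) • 𝐊 ^ t) • y = ((q ^ n) ^ (n - s + r)) ^ t • y := by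
    rw [smul_assoc, pow_smul_of_smul_eq hy, smul_smul, pow_mul, ← mul_pow, ← pow_add]
  simp only [oneIdem, smul_assoc, Finset.sum_smul]
  simp only [← smul_assoc, hterm]
  rw [← Finset.sum_smul]
  split_ifs with hsr
  · simp only [← hsr, Nat.sub_add_cancel hs.le, hroot.pow_eq_one, one_pow, Finset.sum_const,
      Finset.card_range, nsmul_eq_mul, mul_one, smul_smul,
      inv_mul_cancel₀ (natCast_ne_zero_of_isPrimitiveRoot hq), one_smul]
  · have hne : (q ^ n) ^ (n - s + r) ≠ 1 := by
      rw [Ne, hroot.pow_eq_one_iff_dvd]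
      intro hdvd
      have := Nat.eq_of_dvd_of_lt_two_mul (by omega) hdvd (by omega)
      omega
    rw [geom_sum_eq hne, pow_right_comm, hroot.pow_eq_one, one_pow, sub_self, zero_div, zero_smul,
      smul_zero]

lemma sum_smul_oneIdem_smul (hq : IsPrimitiveRoot q (n ^ 2)) {r : ℕ} (hr : r < n)
    (hy : 𝐊 • y = (q ^ n) ^ r • y) (c : ℕ → k) :
    (∑ s ∈ Finset.range n, c s • oneIdem k n q s) • y = c r • y := by
  rw [Finset.sum_smul, Finset.sum_eq_single_of_mem r (Finset.mem_range.2 hr)]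
  · rw [smul_assoc, oneIdem_smul hq hr hr hy, if_pos rfl]
  · intro s hs hsr
    rw [smul_assoc, oneIdem_smul hq hr (Finset.mem_range.1 hs) hy, if_neg hsr, smul_zero]

lemma sum_smul_oneIdem_mul_sum_smul_oneIdem [NeZero q] (hq : IsPrimitiveRoot q (n ^ 2))
    (h4 : 4 ∣ n) {c d : ℕ → k} (hcd : ∀ r, c r * d r = 1) :
    (∑ s ∈ Finset.range n, c s • oneIdem k n q s) *
      ∑ s ∈ Finset.range n, d s • oneIdem k n q s = 1 := by
  nth_rw 1 [← mul_one (_ * _)]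
  rw [← sum_eIdem hq (dvd_trans (by norm_num) h4), Finset.mul_sum]
  refine Finset.sum_congr rfl fun i _ => ?_
  rw [Finset.mul_sum]
  refine Finset.sum_congr rfl fun j hj => ?_
  have hK := (isWeightVector_eIdem hq h4 i (Nat.le_of_lt_succ (Finset.mem_range.1 hj))).K_smul
  by_cases h0 : eIdem k n q i j = 0
  · rw [h0, mul_zero]
  obtain ⟨r, hr, hl⟩ := exists_pow_eq_of_K_smul hq h0 hK
  rw [← hl] at hK
  rw [mul_assoc, ← smul_eq_mul _ (eIdem k n q i j), sum_smul_oneIdem_smul hq hr hK,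
    mul_smul_comm, ← smul_eq_mul, sum_smul_oneIdem_smul hq hr hK, smul_smul, mul_comm, hcd,
    one_smul]

lemma oneIdem_zero_smul_eq_or (hq : IsPrimitiveRoot q (n ^ 2)) {l : k} (hy : 𝐊 • y = l • y) :
    (oneIdem k n q 0 • y = y ∧ (∑ r ∈ Finset.Icc 1 (n - 1), oneIdem k n q r) • y = 0) ∨
      (oneIdem k n q 0 • y = 0 ∧ (∑ r ∈ Finset.Icc 1 (n - 1), oneIdem k n q r) • y = y) := by
  obtain rfl | hy0 := eq_or_ne y 0
  · simp only [smul_zero, and_self, or_self]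
  obtain ⟨r, hr, rfl⟩ := exists_pow_eq_of_K_smul hq hy0 hy
  have hsum : (∑ s ∈ Finset.Icc 1 (n - 1), oneIdem k n q s) • y =
      ∑ s ∈ Finset.Icc 1 (n - 1), if s = r then y else 0 := by
    rw [Finset.sum_smul]
    refine Finset.sum_congr rfl fun s hs => oneIdem_smul hq hr ?_ hy
    have := Finset.mem_Icc.1 hs
    omega
  rw [hsum, Finset.sum_ite_eq', oneIdem_smul hq hr (by omega) hy]
  obtain rfl | hr0 := Nat.eq_zero_or_pos r
  · exact .inl ⟨if_pos rfl, if_neg (by simp only [Finset.mem_Icc]; omega)⟩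
  · exact .inr ⟨if_neg hr0.ne, if_pos (Finset.mem_Icc.2 (by omega))⟩

variable [NeZero q]

lemma isUnit_flat (hq : IsPrimitiveRoot q (n ^ 2)) (h4 : 4 ∣ n) : IsUnit (flat k n q) :=
  isUnit_iff_exists.2 ⟨∑ s ∈ Finset.range n, q ^ s • oneIdem k n q s,
    sum_smul_oneIdem_mul_sum_smul_oneIdem hq h4 fun r => by
      rw [← mul_pow, inv_mul_cancel₀ (NeZero.ne q), one_pow],
    sum_smul_oneIdem_mul_sum_smul_oneIdem hq h4 fun r => by
      rw [← mul_pow, mul_inv_cancel₀ (NeZero.ne q), one_pow]⟩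

lemma exists_flat_smul_eq (hq : IsPrimitiveRoot q (n ^ 2)) {l : k} (hy : 𝐊 • y = l • y) :
    ∃ c : kˣ, flat k n q • y = c • y := by
  obtain rfl | hy0 := eq_or_ne y 0
  · exact ⟨1, by rw [smul_zero, smul_zero]⟩
  obtain ⟨r, hr, rfl⟩ := exists_pow_eq_of_K_smul hq hy0 hy
  exact ⟨(Units.mk0 q (NeZero.ne q))⁻¹ ^ r, by
    rw [flat, sum_smul_oneIdem_smul hq hr hy, Units.smul_def, Units.val_pow_eq_pow_val,
      Units.val_inv_eq_inv_val, Units.val_mk0]⟩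

lemma exists_inverse_flat_smul_eq (hq : IsPrimitiveRoot q (n ^ 2)) (h4 : 4 ∣ n) {l : k}
    (hy : 𝐊 • y = l • y) : ∃ c : kˣ, Ring.inverse (flat k n q) • y = c • y := by
  obtain ⟨c, hc⟩ := exists_flat_smul_eq hq hy
  refine ⟨c⁻¹, ?_⟩
  rw [eq_inv_smul_iff, Units.smul_def, ← smul_algebra_smul_comm, ← Units.smul_def, ← hc,
    ← mul_smul, Ring.inverse_mul_cancel _ (isUnit_flat hq h4), one_smul]

end Flat

/-! ### Tensor products of modules -/

/-- The `u`-module `X ⊗ Y`, on which `u` acts through `Δ`. This is a type synonym of `X ⊗[k] Y`, so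
that `tensorModule` can be an instance. -/
def TensorRep (_Δ : U k n q →ₐ[k] U k n q ⊗[k] U k n q) (X Y : Type) [AddCommGroup X] [Module k X]
    [AddCommGroup Y] [Module k Y] : Type :=
  X ⊗[k] Y

namespace TensorRep

variable {Δ : U k n q →ₐ[k] U k n q ⊗[k] U k n q} {X Y : Type}
  [AddCommGroup X] [Module k X] [AddCommGroup Y] [Module k Y]

instance : AddCommGroup (TensorRep Δ X Y) := inferInstanceAs (AddCommGroup (X ⊗[k] Y))

instance : Module k (TensorRep Δ X Y) := inferInstanceAs (Module k (X ⊗[k] Y))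

variable (Δ) in
/-- The pure tensor `x ⊗ y`, as an element of `TensorRep Δ X Y`. -/
def tmul : X →ₗ[k] Y →ₗ[k] TensorRep Δ X Y := TensorProduct.mk k X Y

lemma exists_basis {a b : ℕ} (bX : Module.Basis (Fin a) k X) (bY : Module.Basis (Fin b) k Y) :
    ∃ B : Module.Basis (Fin a × Fin b) k (TensorRep Δ X Y),
      ∀ i j, B (i, j) = tmul Δ (bX i) (bY j) :=
  ⟨bX.tensorProduct bY, fun i j => bX.tensorProduct_apply bY i j⟩

variable [Module (U k n q) X] [IsScalarTower k (U k n q) X] [SMulCommClass (U k n q) k X]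
  [Module (U k n q) Y] [IsScalarTower k (U k n q) Y] [SMulCommClass (U k n q) k Y]

instance : Module (U k n q) (TensorRep Δ X Y) := tensorModule k n q Δ X Y

variable (Δ X Y) in
/-- The action of `u ⊗ u` on `X ⊗ Y`. -/
def act : U k n q ⊗[k] U k n q →ₐ[k] Module.End k (TensorRep Δ X Y) :=
  (Module.endTensorEndAlgHom (R := k) (S := k) (A := k) (M := X) (N := Y)).comp
    (Algebra.TensorProduct.map (Algebra.lsmul k k X) (Algebra.lsmul k k Y))

lemma smul_def (u : U k n q) (z : TensorRep Δ X Y) : u • z = act Δ X Y (Δ u) z := rfl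

instance : IsScalarTower k (U k n q) (TensorRep Δ X Y) :=
  ⟨fun c u z => by
    rw [smul_def, smul_def, map_smul, map_smul]
    rfl⟩

lemma act_tmul (u v : U k n q) (x : X) (y : Y) :
    act Δ X Y (u ⊗ₜ[k] v) (tmul Δ x y) = tmul Δ (u • x) (v • y) := rfl

variable {i j : ℤ} {ε δ : kˣ} {x : X} {y : Y}

lemma isWeightVector_tmul [NeZero q] (hΔ : IsComul k n q Δ) (hx : IsWeightVector n q i ε x)
    (hy : IsWeightVector n q j δ y) : IsWeightVector n q (i + j) (ε * δ) (tmul Δ x y) := by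
  constructor
  · rw [smul_def, hΔ.1, act_tmul, hx.K_smul, hy.K_smul, map_smul, map_smul, LinearMap.smul_apply,
      smul_smul, mul_comm, mul_mul_mul_comm, ← zpow_add₀ (NeZero.ne q), Units.val_mul]
    congr 3
    ring
  · rw [smul_def, hΔ.2.1, act_tmul, hx.Kh_smul, hy.Kh_smul, map_smul, map_smul,
      LinearMap.smul_apply, smul_smul, mul_comm, mul_mul_mul_comm, ← zpow_add₀ (NeZero.ne q),
      Units.val_mul]
    congr 3
    ring

variable [NeZero n] [NeZero q]

lemma exists_E_smul_tmul (hΔ : IsComul k n q Δ) (hq : IsPrimitiveRoot q (n ^ 2)) (h4 : 4 ∣ n)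
    (hx : IsWeightVector n q i ε x) (hy : IsWeightVector n q j δ y) :
    ∃ η θ : kˣ, 𝐄 • tmul Δ x y = η • tmul Δ (𝐄 • x) y + θ • tmul Δ x (𝐄 • y) := by
  obtain ⟨η, hη⟩ := exists_inverse_flat_smul_eq hq h4 hy.K_smul
  have hE : 𝐄 • tmul Δ x y = η • tmul Δ (𝐄 • x) y +
      tmul Δ (Kinv k n q • x) (oneIdem k n q 0 • 𝐄 • y) +
      tmul Δ x ((∑ r ∈ Finset.Icc 1 (n - 1), oneIdem k n q r) • 𝐄 • y) := by
    rw [smul_def, hΔ.2.2.1, map_add, map_add, LinearMap.add_apply, LinearMap.add_apply, act_tmul,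
      act_tmul, act_tmul, hη, one_smul, mul_smul, mul_smul, Units.smul_def, Units.smul_def,
      map_smul]
  rw [hE]
  obtain ⟨h₀, h₁⟩ | ⟨h₀, h₁⟩ := oneIdem_zero_smul_eq_or hq hy.E_smul.K_smul
  · refine ⟨η, (ε * Units.mk0 q (NeZero.ne q) ^ (-(n * i) : ℤ)) ^ (n - 1), ?_⟩
    rw [h₀, h₁, map_zero, add_zero, Kinv, pow_smul_of_smul_eq hx.K_smul,
      LinearMap.map_smul (tmul Δ), LinearMap.smul_apply, Units.smul_def (_ ^ _),
      Units.val_pow_eq_pow_val, Units.val_mul, Units.val_zpow_eq_zpow_val, Units.val_mk0]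
  · exact ⟨η, 1, by rw [h₀, h₁, map_zero, add_zero, one_smul]⟩

lemma exists_F_smul_tmul (hΔ : IsComul k n q Δ) (hq : IsPrimitiveRoot q (n ^ 2))
    (hx : IsWeightVector n q i ε x) (hy : IsWeightVector n q j δ y) :
    ∃ η θ : kˣ, 𝐅 • tmul Δ x y = η • tmul Δ (𝐅 • x) y + θ • tmul Δ x (𝐅 • y) := by
  obtain ⟨η, hη⟩ := exists_flat_smul_eq hq hy.K_smul
  have hF : 𝐅 • tmul Δ x y = η • tmul Δ (𝐅 • x) y +
      tmul Δ ((𝐋) • x) (𝐅 • (∑ r ∈ Finset.Icc 1 (n - 1), oneIdem k n q r) • y) +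
      tmul Δ (𝐊h • x) (𝐅 • oneIdem k n q 0 • y) := by
    rw [smul_def, hΔ.2.2.2, map_add, map_add, LinearMap.add_apply, LinearMap.add_apply, act_tmul,
      act_tmul, act_tmul, hη, mul_smul 𝐅, mul_smul 𝐅, Units.smul_def, Units.smul_def, map_smul]
  rw [hF]
  obtain ⟨h₀, h₁⟩ | ⟨h₀, h₁⟩ := oneIdem_zero_smul_eq_or hq hy.K_smul
  · refine ⟨η, ε * Units.mk0 q (NeZero.ne q) ^ ((2 - n) * i : ℤ), ?_⟩
    rw [h₀, h₁, smul_zero, map_zero, add_zero, hx.Kh_smul, LinearMap.map_smul (tmul Δ),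
      LinearMap.smul_apply, Units.smul_def (_ * _), Units.val_mul, Units.val_zpow_eq_zpow_val,
      Units.val_mk0]
  · refine ⟨η, Units.mk0 q (NeZero.ne q) ^ (2 * i), ?_⟩
    rw [h₀, h₁, smul_zero, map_zero, add_zero, hx.L_smul, LinearMap.map_smul (tmul Δ),
      LinearMap.smul_apply, Units.smul_def (_ ^ _), Units.val_zpow_eq_zpow_val, Units.val_mk0]

end TensorRep

/-! ### Tensor products of two simple modules as grids -/

/-- The shape of the basis `τ i j = E ^ i • x ⊗ E ^ j • y` of a tensor product of two simple modules
of dimensions `a` and `b`, extended by zero outside `i < a`, `j < b`: each of `E` and `F` moves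
`τ i j` to its two neighbours, and only the scalars which may vanish are specified. -/
structure IsTensorGrid {T : Type*} [AddCommGroup T] [Module k T] (n : ℕ) (q : k)
    [Module (U k n q) T] (a b : ℕ) (w : ℤ) (ε : kˣ) (τ : ℕ → ℕ → T) : Prop where
  eq_zero_left : ∀ {i j}, a ≤ i → τ i j = 0
  eq_zero_right : ∀ {i j}, b ≤ j → τ i j = 0
  E_smul : ∀ i j, ∃ η θ : kˣ, E k n q • τ i j = η • τ (i + 1) j + θ • τ i (j + 1)
  F_smul : ∀ i j, i < a → j < b → ∃ η θ : k, (η = 0 ↔ i = 0) ∧ (θ = 0 ↔ j = 0) ∧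
    F k n q • τ i j = η • τ (i - 1) j + θ • τ i (j - 1)
  isWeightVector : ∀ i j : ℕ, IsWeightVector n q (w - i - j) ε (τ i j)
  exists_basis : ∃ B : Module.Basis (Fin a × Fin b) k T, ∀ i j, B (i, j) = τ i j

lemma IsSimpleGenerator.exists_F_smul_E_pow_smul {M : Type*} [AddCommGroup M] [Module k M]
    [Module (U k n q) M] [IsScalarTower k (U k n q) M] [NeZero n] [NeZero q] {i m : ℕ} {ε : kˣ}
    {s : M} (hs : IsSimpleGenerator n q i ε s) (hq : IsPrimitiveRoot q (n ^ 2))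
    (hm : m < n ^ 2 - 2 * i + 1) :
    ∃ c : k, (c = 0 ↔ m = 0) ∧ 𝐅 • 𝐄 ^ m • s = c • 𝐄 ^ (m - 1) • s := by
  have hi := hs.one_le
  refine ⟨loweringCoeff q (-i) m, ⟨fun h => ?_, fun h => by rw [h, loweringCoeff_zero]⟩,
    hs.F_smul_E_pow_smul m⟩
  by_contra hm0
  have :=
    (loweringCoeff_neg_eq_zero_iff hq hi hs.two_mul_le (Nat.pos_of_ne_zero hm0) (by omega)).1 h
  omega

lemma IsSimpleGenerator.isTensorGrid [NeZero n] [NeZero q] {X Y : Type} [AddCommGroup X]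
    [Module k X] [Module (U k n q) X] [IsScalarTower k (U k n q) X] [SMulCommClass (U k n q) k X]
    [AddCommGroup Y] [Module k Y] [Module (U k n q) Y] [IsScalarTower k (U k n q) Y]
    [SMulCommClass (U k n q) k Y] {Δ : U k n q →ₐ[k] U k n q ⊗[k] U k n q} (hΔ : IsComul k n q Δ)
    (hq : IsPrimitiveRoot q (n ^ 2)) (h4 : 4 ∣ n) {i j : ℕ} {ε δ : kˣ} {x : X} {y : Y}
    (hx : IsSimpleGenerator n q i ε x) (hxspan : Submodule.span (U k n q) {x} = ⊤)
    (hy : IsSimpleGenerator n q j δ y) (hyspan : Submodule.span (U k n q) {y} = ⊤) :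
    IsTensorGrid n q (n ^ 2 - 2 * i + 1) (n ^ 2 - 2 * j + 1) (-i - j) (ε * δ)
      fun l m => TensorRep.tmul Δ (𝐄 ^ l • x) (𝐄 ^ m • y) where
  eq_zero_left h := by
    rw [pow_smul_eq_zero_of_le hx.E_pow_smul_eq_zero h, map_zero, LinearMap.zero_apply]
  eq_zero_right h := by rw [pow_smul_eq_zero_of_le hy.E_pow_smul_eq_zero h, map_zero]
  E_smul l m := by
    obtain ⟨η, θ, h⟩ :=
      TensorRep.exists_E_smul_tmul hΔ hq h4 (hx.E_pow_smul l) (hy.E_pow_smul m)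
    exact ⟨η, θ, by rw [h, pow_succ', pow_succ', mul_smul, mul_smul]⟩
  F_smul l m hl hm := by
    obtain ⟨η, θ, h⟩ := TensorRep.exists_F_smul_tmul hΔ hq (hx.E_pow_smul l) (hy.E_pow_smul m)
    obtain ⟨c, hc0, hc⟩ := hx.exists_F_smul_E_pow_smul hq hl
    obtain ⟨d, hd0, hd⟩ := hy.exists_F_smul_E_pow_smul hq hm
    refine ⟨η * c, θ * d, by rwa [Units.mul_right_eq_zero], by rwa [Units.mul_right_eq_zero], ?_⟩
    rw [h, hc, hd, LinearMap.map_smul (TensorRep.tmul Δ), LinearMap.smul_apply,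
      LinearMap.map_smul (TensorRep.tmul Δ _), Units.smul_def, Units.smul_def, smul_smul, smul_smul]
  isWeightVector l m := by
    convert TensorRep.isWeightVector_tmul hΔ (hx.E_pow_smul l) (hy.E_pow_smul m) using 1
    ring
  exists_basis := by
    obtain ⟨bX, hbX⟩ := hx.exists_basis hxspan
    obtain ⟨bY, hbY⟩ := hy.exists_basis hyspan
    obtain ⟨B, hB⟩ := TensorRep.exists_basis (Δ := Δ) bX bY
    exact ⟨B, fun l m => by rw [hB, hbX, hbY]⟩

section Embeddings

variable {X T : Type*} [AddCommGroup X] [Module (U k n q) X] [AddCommGroup T] [Module (U k n q) T]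

-- `F` is nilpotent, so a nonzero submodule meets the kernel of `F`.
lemma injective_of_forall_F_smul_eq_zero (Φ : X →ₗ[U k n q] T)
    (hΦ : ∀ z, 𝐅 • z = 0 → Φ z = 0 → z = 0) : Function.Injective Φ := by
  refine (injective_iff_map_eq_zero Φ).2 fun z hz => by_contra fun hz0 => ?_
  obtain ⟨t, ht, hFt⟩ := exists_F_pow_smul_ne_zero (k := k) (n := n) (q := q) hz0
  exact ht (hΦ _ hFt (by rw [map_smul, hz, smul_zero]))

variable [Module k X] [IsScalarTower k (U k n q) X] [Module k T] [IsScalarTower k (U k n q) T]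

lemma nonempty_linearEquiv_of_injective {ι κ : Type*} [Fintype ι] [Fintype κ]
    (bX : Module.Basis ι k X) (bT : Module.Basis κ k T) (hcard : Fintype.card ι = Fintype.card κ)
    (Φ : X →ₗ[U k n q] T) (hΦ : Function.Injective Φ) : Nonempty (T ≃ₗ[U k n q] X) := by
  have := Module.Finite.of_basis bX
  have := Module.Finite.of_basis bT
  have hrank : Module.finrank k X = Module.finrank k T := by
    rw [Module.finrank_eq_card_basis bX, Module.finrank_eq_card_basis bT, hcard]
  have hsurj : Function.Surjective (Φ.restrictScalars k) :=
    (LinearMap.injective_iff_surjective_of_finrank_eq_finrank hrank).1 hΦ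
  exact ⟨(LinearEquiv.ofBijective Φ ⟨hΦ, hsurj⟩).symm⟩

end Embeddings

namespace IsTensorGrid

variable {T : Type*} [AddCommGroup T] [Module k T] [Module (U k n q) T]
  {a b : ℕ} {w : ℤ} {ε : kˣ} {τ : ℕ → ℕ → T}

lemma of_modEq [IsScalarTower k (U k n q) T] [NeZero q] (hn : Even n) (hq : q ^ n ^ 2 = 1)
    {w' : ℤ}
    (hτ : IsTensorGrid n q a b w ε τ) (hw : 2 * w ≡ 2 * w' [ZMOD n ^ 2]) :
    IsTensorGrid n q a b w' ε τ where
  __ := hτ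
  isWeightVector i j := by
    refine (hτ.isWeightVector i j).of_modEq hn hq ?_
    simpa only [mul_sub] using (hw.sub_right _).sub_right _

lemma exists_dual (hτ : IsTensorGrid n q a b w ε τ) {i j : ℕ} (hi : i < a) (hj : j < b) :
    ∃ f : T →ₗ[k] k, ∀ i' j', f (τ i' j') = if i' = i ∧ j' = j then 1 else 0 := by
  obtain ⟨B, hB⟩ := hτ.exists_basis
  refine ⟨B.coord (⟨i, hi⟩, ⟨j, hj⟩), fun i' j' => ?_⟩
  by_cases hi' : i' < a
  · by_cases hj' : j' < b
    · have hB' : τ i' j' = B (⟨i', hi'⟩, ⟨j', hj'⟩) :=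
        (hB ⟨i', hi'⟩ ⟨j', hj'⟩).symm
      simp only [hB', Module.Basis.coord_apply, Module.Basis.repr_self, Finsupp.single_apply,
        Prod.mk.injEq, Fin.mk.injEq]
    · rw [hτ.eq_zero_right (by omega), map_zero, if_neg (by omega)]
  · rw [hτ.eq_zero_left (by omega), map_zero, if_neg (by omega)]

lemma ne_zero (hτ : IsTensorGrid n q a b w ε τ) {i j : ℕ} (hi : i < a) (hj : j < b) :
    τ i j ≠ 0 := by
  obtain ⟨f, hf⟩ := hτ.exists_dual hi hj
  intro h
  have := hf i j
  rw [h, map_zero, if_pos ⟨rfl, rfl⟩] at this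
  exact zero_ne_one this

lemma exists_F_smul_zero_left (hτ : IsTensorGrid n q a b w ε τ) (ha : 0 < a) {j : ℕ} (hj : j < b) :
    ∃ c : k, (c = 0 ↔ j = 0) ∧ 𝐅 • τ 0 j = c • τ 0 (j - 1) := by
  obtain ⟨η, θ, hη, hθ, h⟩ := hτ.F_smul 0 j ha hj
  exact ⟨θ, hθ, by rw [h, hη.2 rfl, zero_smul, zero_add]⟩

lemma exists_F_smul_zero_right (hτ : IsTensorGrid n q a b w ε τ) {i : ℕ} (hi : i < a)
    (hb : 0 < b) : ∃ c : k, (c = 0 ↔ i = 0) ∧ 𝐅 • τ i 0 = c • τ (i - 1) 0 := by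
  obtain ⟨η, θ, hη, hθ, h⟩ := hτ.F_smul i 0 hi hb
  exact ⟨η, hη, by rw [h, hθ.2 rfl, zero_smul, add_zero]⟩

lemma isPrimitiveVector_zero_zero (hτ : IsTensorGrid n q a b w ε τ) (ha : 0 < a) (hb : 0 < b) :
    IsPrimitiveVector n q w ε (τ 0 0) where
  toIsWeightVector := by simpa using hτ.isWeightVector 0 0
  F_smul := by
    obtain ⟨c, hc, h⟩ := hτ.exists_F_smul_zero_left ha hb
    rw [h, hc.2 rfl, zero_smul]

end IsTensorGrid

namespace IsTensorGrid

variable {T : Type*} [AddCommGroup T] [Module k T] [Module (U k n q) T]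
  [IsScalarTower k (U k n q) T] {a b : ℕ} {w : ℤ} {ε : kˣ} {τ : ℕ → ℕ → T}

lemma exists_E_pow_smul_zero_zero (hτ : IsTensorGrid n q 1 b w ε τ) (m : ℕ) :
    ∃ c : k, 𝐄 ^ m • τ 0 0 = c • τ 0 m := by
  induction m with
  | zero => exact ⟨1, by rw [pow_zero, one_smul, one_smul]⟩
  | succ m ih =>
    obtain ⟨c, hc⟩ := ih
    obtain ⟨η, θ, h⟩ := hτ.E_smul 0 m
    exact ⟨c * θ, by rw [pow_succ', mul_smul, hc, smul_algebra_smul_comm, h,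
      hτ.eq_zero_left (i := 0 + 1) le_rfl, smul_zero, zero_add, Units.smul_def, smul_smul]⟩

lemma nonempty_linearEquiv_of_one [NeZero n] [NeZero q] (hq : IsPrimitiveRoot q (n ^ 2))
    {X : Type*} [AddCommGroup X] [Module k X] [Module (U k n q) X] [IsScalarTower k (U k n q) X]
    {i : ℕ} {x : X} (hx : IsSimpleGenerator n q i ε x)
    (hspan : Submodule.span (U k n q) {x} = ⊤)
    (hτ : IsTensorGrid n q 1 (n ^ 2 - 2 * i + 1) (-i) ε τ) : Nonempty (T ≃ₗ[U k n q] X) := by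
  have hnil : 𝐄 ^ (n ^ 2 - 2 * i + 1) • τ 0 0 = 0 := by
    obtain ⟨c, hc⟩ := hτ.exists_E_pow_smul_zero_zero (n ^ 2 - 2 * i + 1)
    rw [hc, hτ.eq_zero_right le_rfl, smul_zero]
  obtain ⟨Φ, hΦ⟩ := hx.exists_linearMap hspan
    (hτ.isPrimitiveVector_zero_zero one_pos (Nat.succ_pos _)) hnil
  obtain ⟨bX, -⟩ := hx.exists_basis hspan
  obtain ⟨B, -⟩ := hτ.exists_basis
  refine nonempty_linearEquiv_of_injective bX B (by simp) Φ
    (injective_of_forall_F_smul_eq_zero Φ fun z hFz hΦz => ?_)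
  obtain ⟨u, rfl⟩ := Submodule.mem_span_singleton.1 (hspan ▸ Submodule.mem_top : z ∈ _)
  obtain ⟨c, hc⟩ := hx.exists_eq_smul_of_F_smul_eq_zero hq hFz
  rw [hc, LinearMap.map_smul_of_tower, hΦ] at hΦz
  rw [hc, (smul_eq_zero.1 hΦz).resolve_right (hτ.ne_zero one_pos (Nat.succ_pos _)), zero_smul]

lemma exists_isPrimitiveVector (hτ : IsTensorGrid n q a b w ε τ) (ha : 2 < a) (hb : 2 < b) :
    ∃ c d : k, IsPrimitiveVector n q (w - 2) ε (c • τ 2 0 + τ 1 1 + d • τ 0 2) := by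
  obtain ⟨p, hp, h20⟩ := hτ.exists_F_smul_zero_right ha (by omega)
  obtain ⟨r, hr, h02⟩ := hτ.exists_F_smul_zero_left (by omega) hb
  obtain ⟨η, θ, -, -, h11⟩ := hτ.F_smul 1 1 (by omega) (by omega)
  have hp0 : p ≠ 0 := fun h => two_ne_zero (hp.1 h)
  have hr0 : r ≠ 0 := fun h => two_ne_zero (hr.1 h)
  have hw (i j : ℕ) (hij : i + j = 2) : IsWeightVector n q (w - 2) ε (τ i j) := by
    rw [show w - 2 = w - i - j by omega]
    exact hτ.isWeightVector i j
  refine ⟨-(θ / p), -(η / r),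
    (((hw 2 0 rfl).smul _).add (hw 1 1 rfl)).add ((hw 0 2 rfl).smul _), ?_⟩
  rw [smul_add, smul_add, smul_algebra_smul_comm, smul_algebra_smul_comm, h20, h02, h11, smul_smul,
    smul_smul, neg_mul, neg_mul, div_mul_cancel₀ _ hp0, div_mul_cancel₀ _ hr0]
  module

lemma exists_E_pow_smul_antidiagonal (hτ : IsTensorGrid n q a 3 w ε τ) (c₀ c₁ c₂ : k) (m : ℕ) :
    ∃ d₀ d₁ d₂ : k, 𝐄 ^ m • (c₀ • τ 2 0 + c₁ • τ 1 1 + c₂ • τ 0 2) =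
      d₀ • τ (m + 2) 0 + d₁ • τ (m + 1) 1 + d₂ • τ m 2 := by
  induction m with
  | zero => exact ⟨c₀, c₁, c₂, by rw [pow_zero, one_smul, zero_add, zero_add]⟩
  | succ m ih =>
    obtain ⟨d₀, d₁, d₂, h⟩ := ih
    obtain ⟨η₀, θ₀, h₀⟩ := hτ.E_smul (m + 2) 0
    obtain ⟨η₁, θ₁, h₁⟩ := hτ.E_smul (m + 1) 1
    obtain ⟨η₂, θ₂, h₂⟩ := hτ.E_smul m 2
    rw [hτ.eq_zero_right (j := 2 + 1) le_rfl, smul_zero, add_zero] at h₂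
    refine ⟨d₀ * η₀, d₀ * θ₀ + d₁ * η₁, d₁ * θ₁ + d₂ * η₂, ?_⟩
    rw [pow_succ', mul_smul, h, smul_add, smul_add, smul_algebra_smul_comm, smul_algebra_smul_comm,
      smul_algebra_smul_comm, h₀, h₁, h₂]
    simp only [Units.smul_def, add_right_comm m _ 1, zero_add, one_add_one_eq_two, add_assoc]
    module

lemma eq_zero_of_F_smul_eq_zero (hτ : IsTensorGrid n q (a + 3) b w ε τ) (hb : 2 < b) {c d : k}
    (h : 𝐅 • (c • τ (a + 2) 1 + d • τ (a + 1) 2) = 0) : c = 0 ∧ d = 0 := by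
  obtain ⟨η₁, θ₁, hη₁, -, h₁⟩ := hτ.F_smul (a + 2) 1 (by omega) (by omega)
  obtain ⟨η₂, θ₂, hη₂, -, h₂⟩ := hτ.F_smul (a + 1) 2 (by omega) hb
  rw [smul_add, smul_algebra_smul_comm, smul_algebra_smul_comm, h₁, h₂] at h
  obtain ⟨f, hf⟩ := hτ.exists_dual (i := a) (by omega) hb
  obtain ⟨g, hg⟩ := hτ.exists_dual (i := a + 1) (j := 1) (by omega) (by omega)
  have hd : d = 0 := by
    have := congrArg f h
    simpa [hf, hη₂] using this
  have hc : c = 0 := by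
    have := congrArg g h
    simpa [hg, hη₁, hd] using this
  exact ⟨hc, hd⟩

end IsTensorGrid

namespace IsTensorGrid

variable {T : Type*} [AddCommGroup T] [Module k T] [Module (U k n q) T]
  [IsScalarTower k (U k n q) T] {ε : kˣ} {τ : ℕ → ℕ → T} [NeZero n] [NeZero q]

-- At weight `-2`, the relation between `E` and `F` gives `F • E ^ (n² - 3) • v = 0`, and `F` is
-- injective on the antidiagonal of the grid that contains `E ^ (n² - 3) • v`.
lemma E_pow_smul_eq_zero (hq : IsPrimitiveRoot q (n ^ 2)) (hn : 4 ≤ n ^ 2)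
    (hτ : IsTensorGrid n q (n ^ 2 - 1) 3 0 ε τ) {c d : k}
    (hv : IsPrimitiveVector n q (-2) ε (c • τ 2 0 + τ 1 1 + d • τ 0 2)) :
    𝐄 ^ (n ^ 2 - 3) • (c • τ 2 0 + τ 1 1 + d • τ 0 2) = 0 := by
  obtain ⟨a, ha⟩ := Nat.exists_eq_add_of_le' hn
  rw [show n ^ 2 - 1 = a + 3 by omega] at hτ
  rw [show n ^ 2 - 3 = a + 1 by omega]
  have hF : 𝐅 • 𝐄 ^ (a + 1) • (c • τ 2 0 + τ 1 1 + d • τ 0 2) = 0 := by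
    have hcoeff : loweringCoeff q (-2) (a + 1) = 0 :=
      (loweringCoeff_neg_eq_zero_iff hq (i := 2) (by omega) hn (by omega) (by omega)).2 (by omega)
    rw [hv.F_smul_E_pow_smul, hcoeff, zero_smul]
  obtain ⟨d₀, d₁, d₂, h⟩ := hτ.exists_E_pow_smul_antidiagonal c 1 d (a + 1)
  rw [one_smul, hτ.eq_zero_left (i := a + 1 + 2) (by omega), smul_zero, zero_add] at h
  rw [h] at hF ⊢
  obtain ⟨h₁, h₂⟩ := hτ.eq_zero_of_F_smul_eq_zero (by omega) hF
  rw [h₁, h₂, zero_smul, zero_smul, add_zero]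

variable {Y : Type*} [AddCommGroup Y] [Module k Y] [Module (U k n q) Y]
  [IsScalarTower k (U k n q) Y]

lemma exists_linearMap_of_isProjectiveGenerator (hq : IsPrimitiveRoot q (n ^ 2)) {a b : ℕ}
    (ha : 0 < a) (hb : 1 < b) (hτ : IsTensorGrid n q a b 0 ε τ) {g y : Y}
    (hg : IsProjectiveGenerator n q 1 ε g y) (hspan : Submodule.span (U k n q) {g} = ⊤) :
    ∃ (Ψ : Y →ₗ[U k n q] T) (p r s : k), p ≠ 0 ∧ r ≠ 0 ∧ Ψ y = p • τ 0 0 ∧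
      Ψ (𝐄 • y) = r • τ 1 0 + s • τ 0 1 := by
  obtain ⟨p, hp, h01⟩ := hτ.exists_F_smul_zero_left ha hb
  obtain ⟨η, θ, hE⟩ := hτ.E_smul 0 0
  have hprim : IsPrimitiveVector n q 0 ε (τ 0 0) := hτ.isPrimitiveVector_zero_zero ha (by omega)
  obtain ⟨Ψ, hΨ⟩ := hg.exists_linearMap hq hspan (t := τ 0 1) (b := 𝐅 • τ 0 1)
    (by simpa using hτ.isWeightVector 0 1)
    ⟨by simpa [h01] using hprim.toIsWeightVector.smul p,
      by rw [h01, smul_algebra_smul_comm, hprim.F_smul, smul_zero]⟩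
    (by rw [pow_zero, one_smul])
  have hy : Ψ y = p • τ 0 0 := by
    have := hg.F_smul_gen
    rw [mul_one, Nat.sub_self, pow_zero, one_smul] at this
    rw [← this, map_smul, hΨ, h01]
  refine ⟨Ψ, p, p * η, p * θ, fun h => one_ne_zero (hp.1 h),
    mul_ne_zero (fun h => one_ne_zero (hp.1 h)) η.ne_zero, hy, ?_⟩
  rw [map_smul, hy, smul_algebra_smul_comm, hE, smul_add, Units.smul_def, Units.smul_def,
    smul_smul, smul_smul]

lemma nonempty_linearEquiv_prod (hq : IsPrimitiveRoot q (n ^ 2)) {X : Type*} [AddCommGroup X]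
    [Module k X] [Module (U k n q) X] [IsScalarTower k (U k n q) X] {x : X}
    (hx : IsSimpleGenerator n q 2 ε x) (hxspan : Submodule.span (U k n q) {x} = ⊤) {g y : Y}
    (hg : IsProjectiveGenerator n q 1 ε g y) (hgspan : Submodule.span (U k n q) {g} = ⊤)
    (hτ : IsTensorGrid n q (n ^ 2 - 1) 3 0 ε τ) : Nonempty (T ≃ₗ[U k n q] X × Y) := by
  have hN : 4 ≤ n ^ 2 := hx.two_mul_le
  obtain ⟨c, d, hv⟩ := hτ.exists_isPrimitiveVector (by omega) (by omega)
  obtain ⟨Φ, hΦ⟩ := hx.exists_linearMap hxspan hv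
    (by rw [show n ^ 2 - 2 * 2 + 1 = n ^ 2 - 3 by omega]; exact hτ.E_pow_smul_eq_zero hq hN hv)
  obtain ⟨Ψ, p, r, s, hp, hr, hΨy, hΨE⟩ :=
    hτ.exists_linearMap_of_isProjectiveGenerator hq (by omega) (by omega) hg hgspan
  obtain ⟨bX, -⟩ := hx.exists_basis hxspan
  obtain ⟨bY⟩ := hg.nonempty_basis hq hgspan
  obtain ⟨B, -⟩ := hτ.exists_basis
  refine nonempty_linearEquiv_of_injective (bX.prod bY) B
    (by simp only [Fintype.card_sum, Fintype.card_prod, Fintype.card_fin]; omega) (Φ.coprod Ψ)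
    (injective_of_forall_F_smul_eq_zero _ ?_)
  rintro ⟨z, z'⟩ hF hzero
  obtain ⟨u, rfl⟩ := Submodule.mem_span_singleton.1 (hxspan ▸ Submodule.mem_top : z ∈ _)
  obtain ⟨u', rfl⟩ := Submodule.mem_span_singleton.1 (hgspan ▸ Submodule.mem_top : z' ∈ _)
  obtain ⟨e, he⟩ := hx.exists_eq_smul_of_F_smul_eq_zero hq (congrArg Prod.fst hF)
  obtain ⟨e', e'', he'⟩ := hg.exists_eq_smul_add_smul_of_F_smul_eq_zero hq (congrArg Prod.snd hF)
  rw [pow_one] at he'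
  rw [he, he', LinearMap.coprod_apply, map_add, LinearMap.map_smul_of_tower,
    LinearMap.map_smul_of_tower, LinearMap.map_smul_of_tower, hΦ, hΨy, hΨE] at hzero
  obtain ⟨f₁₁, hf₁₁⟩ := hτ.exists_dual (i := 1) (j := 1) (by omega) (by omega)
  obtain ⟨f₁₀, hf₁₀⟩ := hτ.exists_dual (i := 1) (j := 0) (by omega) (by omega)
  obtain ⟨f₀₀, hf₀₀⟩ := hτ.exists_dual (i := 0) (j := 0) (by omega) (by omega)
  have he0 : e = 0 := by simpa [hf₁₁] using congrArg f₁₁ hzero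
  have he''0 : e'' = 0 := by simpa [hf₁₀, he0, hr] using congrArg f₁₀ hzero
  have he'0 : e' = 0 := by simpa [hf₀₀, he0, he''0, hp] using congrArg f₀₀ hzero
  rw [he, he', he0, he'0, he''0, zero_smul, zero_smul, zero_smul, add_zero, Prod.mk_zero_zero]

end IsTensorGrid

/-! ### The two decompositions -/

lemma exists_isTensorGrid_S [NeZero n] [NeZero q] {Δ : U k n q →ₐ[k] U k n q ⊗[k] U k n q}
    (hΔ : IsComul k n q Δ) (hq : IsPrimitiveRoot q (n ^ 2)) (h4 : 4 ∣ n) {i₁ i₂ j₁ j₂ : ℕ}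
    (hi₁ : 1 ≤ i₁) (hi₁' : 2 * i₁ ≤ n ^ 2) (hj₁ : j₁ ≤ 1)
    (hi₂ : 1 ≤ i₂) (hi₂' : 2 * i₂ ≤ n ^ 2) (hj₂ : j₂ ≤ 1) :
    ∃ τ : ℕ → ℕ → TensorRep Δ (S k n q i₁ j₁) (S k n q i₂ j₂),
      IsTensorGrid n q (n ^ 2 - 2 * i₁ + 1) (n ^ 2 - 2 * i₂ + 1) (-i₁ - i₂)
        ((-1) ^ (i₁ + j₁ + (i₂ + j₂))) τ := by
  obtain ⟨x, hx, hxspan⟩ := exists_isSimpleGenerator_S (k := k) hq h4 hi₁ hi₁' hj₁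
  obtain ⟨y, hy, hyspan⟩ := exists_isSimpleGenerator_S (k := k) hq h4 hi₂ hi₂' hj₂
  exact ⟨_, pow_add (-1 : kˣ) (i₁ + j₁) (i₂ + j₂) ▸
    IsSimpleGenerator.isTensorGrid hΔ hq h4 hx hxspan hy hyspan⟩

lemma neg_one_pow_eq_of_mod_two_eq {a b : ℕ} (h : a % 2 = b % 2) :
    (-1 : kˣ) ^ a = (-1) ^ b := by
  rw [pow_eq_pow_mod a (neg_one_sq (R := kˣ)), h, ← pow_eq_pow_mod b (neg_one_sq (R := kˣ))]

section Decompositions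

variable [NeZero n] [NeZero q] {Δ : U k n q →ₐ[k] U k n q ⊗[k] U k n q} {j₁ j₂ : ℕ}

lemma nonempty_linearEquiv_S_half_tensor_S (hΔ : IsComul k n q Δ)
    (hq : IsPrimitiveRoot q (n ^ 2)) (h4 : 4 ∣ n) (hj₁ : j₁ ≤ 1) (hj₂ : j₂ ≤ 1) :
    Nonempty (TensorRep Δ (S k n q (n ^ 2 / 2) j₁) (S k n q (n ^ 2 / 2 - 1) j₂) ≃ₗ[U k n q]
      S k n q (n ^ 2 / 2 - 1) ((j₁ + j₂) % 2)) := by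
  have hdvd : 16 ∣ n ^ 2 := pow_dvd_pow_of_dvd h4 2
  have hpos : 0 < n ^ 2 := Nat.pos_of_neZero _
  obtain ⟨τ, hτ⟩ := exists_isTensorGrid_S hΔ hq h4 (i₁ := n ^ 2 / 2) (i₂ := n ^ 2 / 2 - 1)
    (by omega) (by omega) hj₁ (by omega) (by omega) hj₂
  obtain ⟨x, hx, hxspan⟩ := exists_isSimpleGenerator_S (k := k) hq h4 (i := n ^ 2 / 2 - 1)
    (j := (j₁ + j₂) % 2) (by omega) (by omega) (by omega)
  rw [show n ^ 2 - 2 * (n ^ 2 / 2) + 1 = 1 by omega,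
    neg_one_pow_eq_of_mod_two_eq (b := n ^ 2 / 2 - 1 + (j₁ + j₂) % 2) (by omega)] at hτ
  exact IsTensorGrid.nonempty_linearEquiv_of_one hq hx hxspan
    (hτ.of_modEq (even_iff_two_dvd.2 (by omega)) hq.pow_eq_one
      (Int.modEq_iff_dvd.2 ⟨1, by have := Nat.cast_pow (α := ℤ) n 2; omega⟩))

lemma nonempty_linearEquiv_S_one_tensor_S (hΔ : IsComul k n q Δ)
    (hq : IsPrimitiveRoot q (n ^ 2)) (h4 : 4 ∣ n) (hj₁ : j₁ ≤ 1) (hj₂ : j₂ ≤ 1) :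
    Nonempty (TensorRep Δ (S k n q 1 j₁) (S k n q (n ^ 2 / 2 - 1) j₂) ≃ₗ[U k n q]
      S k n q 2 ((j₁ + j₂) % 2) × P k n q 1 ((j₁ + j₂ + 1) % 2)) := by
  have hdvd : 16 ∣ n ^ 2 := pow_dvd_pow_of_dvd h4 2
  have hpos : 0 < n ^ 2 := Nat.pos_of_neZero _
  obtain ⟨τ, hτ⟩ := exists_isTensorGrid_S hΔ hq h4 (i₁ := 1) (i₂ := n ^ 2 / 2 - 1)
    (by omega) (by omega) hj₁ (by omega) (by omega) hj₂
  obtain ⟨x, hx, hxspan⟩ := exists_isSimpleGenerator_S (k := k) hq h4 (i := 2)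
    (j := (j₁ + j₂) % 2) (by omega) (by omega) (by omega)
  obtain ⟨g, y, hg, hgspan⟩ := exists_isProjectiveGenerator_P (k := k) hq h4
    (j := (j₁ + j₂ + 1) % 2) (by omega)
  rw [neg_one_pow_eq_of_mod_two_eq (b := 2 + (j₁ + j₂) % 2) (by omega)] at hg
  rw [show n ^ 2 - 2 * 1 + 1 = n ^ 2 - 1 by omega,
    show n ^ 2 - 2 * (n ^ 2 / 2 - 1) + 1 = 3 by omega,
    neg_one_pow_eq_of_mod_two_eq (b := 2 + (j₁ + j₂) % 2) (by omega)] at hτ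
  exact IsTensorGrid.nonempty_linearEquiv_prod hq hx hxspan hg hgspan
    (hτ.of_modEq (even_iff_two_dvd.2 (by omega)) hq.pow_eq_one
      (Int.modEq_iff_dvd.2 ⟨1, by have := Nat.cast_pow (α := ℤ) n 2; omega⟩))

end Decompositions

end QFL

open QFL in
theorem statement17_general (k : Type) [Field k]
    (n : ℕ) (hn : 0 < n) (h4 : 4 ∣ n) (q : k) (hq : IsPrimitiveRoot q (n ^ 2))
    (Δ : U k n q →ₐ[k] (U k n q ⊗[k] U k n q)) (hΔ : IsComul k n q Δ) :
    ∀ j₁ j₂ : ℕ, j₁ ≤ 1 → j₂ ≤ 1 →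
      (letI := tensorModule k n q Δ (S k n q (n ^ 2 / 2) j₁) (S k n q (n ^ 2 / 2 - 1) j₂)
      Nonempty (((S k n q (n ^ 2 / 2) j₁) ⊗[k] (S k n q (n ^ 2 / 2 - 1) j₂))
        ≃ₗ[U k n q] (S k n q (n ^ 2 / 2 - 1) ((j₁ + j₂) % 2)))) ∧
      (letI := tensorModule k n q Δ (S k n q 1 j₁) (S k n q (n ^ 2 / 2 - 1) j₂)
      Nonempty (((S k n q 1 j₁) ⊗[k] (S k n q (n ^ 2 / 2 - 1) j₂))
        ≃ₗ[U k n q]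
          ((S k n q 2 ((j₁ + j₂) % 2)) × (P k n q 1 ((j₁ + j₂ + 1) % 2))))) := by
  have : NeZero n := ⟨hn.ne'⟩
  have : NeZero q := ⟨hq.ne_zero (pow_ne_zero 2 hn.ne')⟩
  exact fun j₁ j₂ hj₁ hj₂ =>
    ⟨nonempty_linearEquiv_S_half_tensor_S hΔ hq h4 hj₁ hj₂,
      nonempty_linearEquiv_S_one_tensor_S hΔ hq h4 hj₁ hj₂⟩

open QFL in
/-- Lemma 4.5: `S_{n²,j₁} ⊗ S_{n²-2,j₂} ≅ S_{n²-2, \overline{j₁+j₂}}` and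
`S_{2,j₁} ⊗ S_{n²-2,j₂} ≅ S_{4, \overline{j₁+j₂}} ⊕ P_{2, \overline{j₁+j₂+1}}`.
(Indices: `S_{2i,j}` and `P_{2i,j}` are encoded by `i`.) -/
theorem statement17 (k : Type) [Field k] [IsAlgClosed k] [CharZero k]
    (n : ℕ) (hn : 0 < n) (h4 : 4 ∣ n) (q : k) (hq : IsPrimitiveRoot q (n ^ 2))
    (Δ : U k n q →ₐ[k] (U k n q ⊗[k] U k n q)) (hΔ : IsComul k n q Δ) :
    ∀ j₁ j₂ : ℕ, j₁ ≤ 1 → j₂ ≤ 1 →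
      (letI := tensorModule k n q Δ (S k n q (n ^ 2 / 2) j₁) (S k n q (n ^ 2 / 2 - 1) j₂)
      Nonempty (((S k n q (n ^ 2 / 2) j₁) ⊗[k] (S k n q (n ^ 2 / 2 - 1) j₂))
        ≃ₗ[U k n q] (S k n q (n ^ 2 / 2 - 1) ((j₁ + j₂) % 2)))) ∧
      (letI := tensorModule k n q Δ (S k n q 1 j₁) (S k n q (n ^ 2 / 2 - 1) j₂)
      Nonempty (((S k n q 1 j₁) ⊗[k] (S k n q (n ^ 2 / 2 - 1) j₂))
        ≃ₗ[U k n q]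
          ((S k n q 2 ((j₁ + j₂) % 2)) × (P k n q 1 ((j₁ + j₂ + 1) % 2))))) :=
  statement17_general k n hn h4 q hq Δ hΔ
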